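/- arXiv:1608.00091 — 6 statements merged into one kernel-verified Lean document; each statement's English description precedes it below -/
import Mathlib

section
/- The value of the highest predistance polynomial at the spectral radius is p_d(λ0) = n·(Σ_{i=0}^{d} π0²/(m_i·π_i²))^{−1}, where π_i = Π_{j≠i} |λ_i − λ_j| for i = 0, …, d. -/
/-!
Write `q i = p_d(λ_i)` and `φ i = ∏_{j ≠ i} (λ_i - λ_j)`, so that `π_i = |φ i|`. Since
`p_0, …, p_{d-1}` span the polynomials of degree less than `d`, the polynomial `p_d` is orthogonal
to all of them (`ip_eq_zero_of_degree_lt`). Testing this against `∏_{j ≠ 0, i} (X - λ_j)`, which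
vanishes at all nodes except `λ_0` and `λ_i`, gives `m_i q_i φ_i = m_0 q_0 φ_0`
(`weight_mul_node_const`). Since `m_0 = 1`, substituting into the normalization
`n q_0 = ∑ m_i q_i ^ 2` yields `n q_0 = q_0 ^ 2 ∑ φ_0 ^ 2 / (m_i φ_i ^ 2)`. Finally `q_0 ≠ 0`,
since otherwise `p_d`, of degree `d`, would vanish at all the `d + 1` nodes.
-/

open Polynomial Finset

/-- The scalar product `⟨f,g⟩_Γ = (1/n)·Σ_{i=0}^d m_i f(λ_i) g(λ_i)`. -/
noncomputable def ip (n d : ℕ) (m : ℕ → ℕ) (lam : ℕ → ℝ) (f g : Polynomial ℝ) : ℝ :=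
  (n : ℝ)⁻¹ * ∑ i ∈ Finset.range (d + 1), (m i : ℝ) * f.eval (lam i) * g.eval (lam i)

/-- The preintersection numbers `ξ_{ij}^h = ⟨p_i p_j, p_h⟩ / ⟨p_h, p_h⟩`. -/
noncomputable def xi (n d : ℕ) (m : ℕ → ℕ) (lam : ℕ → ℝ) (p : ℕ → Polynomial ℝ)
    (i j h : ℕ) : ℝ :=
  ip n d m lam (p i * p j) (p h) / ip n d m lam (p h) (p h)

/-- `α_i = ξ_{1,i}^i`. -/
noncomputable def alph (n d : ℕ) (m : ℕ → ℕ) (lam : ℕ → ℝ) (p : ℕ → Polynomial ℝ)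
    (i : ℕ) : ℝ :=
  xi n d m lam p 1 i i

/-- `β_i = ξ_{1,i+1}^i` for `i < d`, with the convention `β_d = 0`. -/
noncomputable def bet (n d : ℕ) (m : ℕ → ℕ) (lam : ℕ → ℝ) (p : ℕ → Polynomial ℝ)
    (i : ℕ) : ℝ :=
  if i < d then xi n d m lam p 1 (i + 1) i else 0

/-- `γ_i = ξ_{1,i-1}^i` for `1 ≤ i`, with the convention `γ_0 = 0`. -/
noncomputable def gam (n d : ℕ) (m : ℕ → ℕ) (lam : ℕ → ℝ) (p : ℕ → Polynomial ℝ)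
    (i : ℕ) : ℝ :=
  if 1 ≤ i then xi n d m lam p 1 (i - 1) i else 0

lemma ip_add_left (n d : ℕ) (m : ℕ → ℕ) (lam : ℕ → ℝ) (f g h : Polynomial ℝ) :
    ip n d m lam (f + g) h = ip n d m lam f h + ip n d m lam g h := by
  simp only [ip, eval_add, ← mul_add, ← Finset.sum_add_distrib]
  congr 1
  exact Finset.sum_congr rfl fun i _ => by ring

lemma ip_C_mul_left (n d : ℕ) (m : ℕ → ℕ) (lam : ℕ → ℝ) (c : ℝ) (g h : Polynomial ℝ) :
    ip n d m lam (C c * g) h = c * ip n d m lam g h := by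
  simp only [ip, eval_mul, eval_C, Finset.mul_sum]
  exact Finset.sum_congr rfl fun i _ => by ring

/-- The degree-`d` member of an orthogonal system with `deg p_i = i` is orthogonal to every
polynomial of smaller degree. The bound `k` drives the induction, which removes the coefficient of
`X ^ k` by subtracting a multiple of `p k`. -/
lemma ip_eq_zero_of_degree_lt (n d : ℕ) (m : ℕ → ℕ) (lam : ℕ → ℝ) (p : ℕ → Polynomial ℝ)
    (hdeg : ∀ i ≤ d, (p i).degree = (i : ℕ))
    (horth : ∀ i ≤ d, ∀ j ≤ d, i ≠ j → ip n d m lam (p i) (p j) = 0)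
    (k : ℕ) (hk : k ≤ d) (f : Polynomial ℝ) (hf : f.degree < (k : ℕ)) :
    ip n d m lam f (p d) = 0 := by
  induction k generalizing f with
  | zero =>
    have : f = 0 := by
      rw [← Polynomial.degree_eq_bot]
      simpa using hf
    simp [this, ip]
  | succ k ih =>
    have hpk : (p k).coeff k ≠ 0 :=
      Polynomial.coeff_ne_zero_of_eq_degree (hdeg k (by omega))
    set c : ℝ := f.coeff k / (p k).coeff k with hc
    have hlt : (f - C c * p k).degree < (k : ℕ) := by
      rw [Polynomial.degree_lt_iff_coeff_zero] at hf ⊢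
      intro j hj
      rcases hj.eq_or_lt with rfl | hj
      · simp [hc, hpk]
      · have h1 : (p k).coeff j = 0 := by
          apply Polynomial.coeff_eq_zero_of_degree_lt
          rw [hdeg k (by omega)]
          exact_mod_cast hj
        simp [hf j hj, h1]
    have hsplit : f = (f - C c * p k) + C c * p k := by ring
    rw [hsplit, ip_add_left, ip_C_mul_left, ih (by omega) _ hlt,
      horth k (by omega) d le_rfl (by omega)]
    simp

/-- A polynomial `q` orthogonal to all polynomials of degree less than `d` takes values at the
nodes `λ_i` such that `m_i q(λ_i) ∏_{j ≠ i} (λ_i - λ_j)` does not depend on `i`. -/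
lemma weight_mul_node_const (n d : ℕ) (hn : n ≠ 0) (m : ℕ → ℕ) (lam : ℕ → ℝ) (q : Polynomial ℝ)
    (hq : ∀ f : Polynomial ℝ, f.degree < (d : ℕ) → ip n d m lam f q = 0)
    (i : ℕ) (hi : i ≤ d) :
    (m i : ℝ) * q.eval (lam i) * ∏ j ∈ (Finset.range (d + 1)).erase i, (lam i - lam j) =
      (m 0 : ℝ) * q.eval (lam 0) * ∏ j ∈ (Finset.range (d + 1)).erase 0, (lam 0 - lam j) := by
  rcases eq_or_ne i 0 with rfl | hi0
  · rfl
  set s := ((Finset.range (d + 1)).erase 0).erase i with hs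
  have hi_mem : i ∈ (Finset.range (d + 1)).erase 0 := by simp; omega
  have h0_mem : 0 ∈ (Finset.range (d + 1)).erase i := by simp; omega
  have hcard : s.card = d - 1 := by
    rw [hs, Finset.card_erase_of_mem hi_mem, Finset.card_erase_of_mem (by simp)]
    simp
  set f : Polynomial ℝ := ∏ j ∈ s, (X - C (lam j)) with hf
  have hfdeg : f.degree < (d : ℕ) := by
    rw [hf, Polynomial.degree_prod]
    simp only [Polynomial.degree_X_sub_C, Finset.sum_const, hcard, nsmul_one]
    exact_mod_cast (by omega : d - 1 < d)
  have heval (x : ℝ) : f.eval x = ∏ j ∈ s, (x - lam j) := by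
    simp [hf, Polynomial.eval_prod]
  have hsum : ∑ k ∈ Finset.range (d + 1), (m k : ℝ) * f.eval (lam k) * q.eval (lam k) = 0 := by
    have h := hq f hfdeg
    rw [ip] at h
    exact (mul_eq_zero.mp h).resolve_left (by simpa using hn)
  have hzero : ∑ k ∈ s, (m k : ℝ) * f.eval (lam k) * q.eval (lam k) = 0 := by
    refine Finset.sum_eq_zero fun k hk => ?_
    rw [heval, Finset.prod_eq_zero hk (sub_self _)]
    simp
  rw [← Finset.add_sum_erase _ _ (by simp : 0 ∈ Finset.range (d + 1)),
    ← Finset.add_sum_erase _ _ hi_mem, hzero, heval, heval] at hsum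
  rw [← Finset.mul_prod_erase _ _ hi_mem, ← Finset.mul_prod_erase _ _ h0_mem,
    Finset.erase_right_comm]
  linear_combination (lam i - lam 0) * hsum

theorem stmt_3
    (V : Type) [Fintype V] [DecidableEq V] (G : SimpleGraph V) [DecidableRel G.Adj]
    (hconn : G.Connected) (n d : ℕ) (hn : Fintype.card V = n)
    (lam : ℕ → ℝ) (m : ℕ → ℕ)
    (hchar : (G.adjMatrix ℝ).charpoly =
      ∏ i ∈ Finset.range (d + 1), (Polynomial.X - Polynomial.C (lam i)) ^ m i)
    (hlam : ∀ i j : ℕ, i < j → j ≤ d → lam j < lam i)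
    (hm0 : m 0 = 1) (hmpos : ∀ i ≤ d, 0 < m i)
    (p : ℕ → Polynomial ℝ)
    (hdeg : ∀ i ≤ d, (p i).degree = (i : ℕ))
    (horth : ∀ i ≤ d, ∀ j ≤ d, i ≠ j → ip n d m lam (p i) (p j) = 0)
    (hnorm : ∀ i ≤ d, ip n d m lam (p i) (p i) = (p i).eval (lam 0))
    :
    (p d).eval (lam 0) =
      (n : ℝ) * (∑ i ∈ Finset.range (d + 1),
        (∏ j ∈ (Finset.range (d + 1)).erase 0, |lam 0 - lam j|) ^ 2 /
          ((m i : ℝ) * (∏ j ∈ (Finset.range (d + 1)).erase i, |lam i - lam j|) ^ 2))⁻¹ := by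
  have hn0 : n ≠ 0 := by
    have := hconn.nonempty
    rw [← hn]
    exact Fintype.card_ne_zero
  have hnR : (n : ℝ) ≠ 0 := by exact_mod_cast hn0
  have hinj : Set.InjOn lam (Finset.range (d + 1)) := by
    intro i hi j hj hij
    simp only [Finset.coe_range, Set.mem_Iio] at hi hj
    rcases lt_trichotomy i j with h | h | h
    · exact absurd hij (hlam i j h (by omega)).ne'
    · exact h
    · exact absurd hij (hlam j i h (by omega)).ne
  set φ : ℕ → ℝ := fun i => ∏ j ∈ (Finset.range (d + 1)).erase i, (lam i - lam j) with hφ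
  have hφ0 (i : ℕ) (hi : i ∈ Finset.range (d + 1)) : φ i ≠ 0 := by
    refine Finset.prod_ne_zero_iff.mpr fun j hj => ?_
    rw [Finset.mem_erase] at hj
    exact sub_ne_zero.mpr fun h => hj.1 (hinj hj.2 hi h.symm)
  have hm (i : ℕ) (hi : i ∈ Finset.range (d + 1)) : (m i : ℝ) ≠ 0 := by
    exact_mod_cast (hmpos i (by simpa [Nat.lt_succ_iff] using hi)).ne'
  have habs (i : ℕ) : (∏ j ∈ (Finset.range (d + 1)).erase i, |lam i - lam j|) ^ 2 = φ i ^ 2 := by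
    rw [← Finset.abs_prod, sq_abs]
  have hkey (i : ℕ) (hi : i ∈ Finset.range (d + 1)) :
      (m i : ℝ) * (p d).eval (lam i) * φ i = (p d).eval (lam 0) * φ 0 := by
    have h := weight_mul_node_const n d hn0 m lam (p d)
      (ip_eq_zero_of_degree_lt n d m lam p hdeg horth d le_rfl) i
      (by simpa [Nat.lt_succ_iff] using hi)
    simpa [hm0, hφ] using h
  have hq0 : (p d).eval (lam 0) ≠ 0 := by
    intro h0
    have hz : p d = 0 := by
      refine Polynomial.eq_zero_of_degree_lt_of_eval_index_eq_zero _ hinj ?_ fun i hi => ?_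
      · rw [hdeg d le_rfl, Finset.card_range]
        exact_mod_cast Nat.lt_succ_self d
      · have h := hkey i hi
        rw [h0, zero_mul] at h
        simpa [hm i hi, hφ0 i hi] using h
    have h := hdeg d le_rfl
    simp [hz] at h
  simp only [habs]
  set S : ℝ := ∑ i ∈ Finset.range (d + 1), φ 0 ^ 2 / ((m i : ℝ) * φ i ^ 2) with hS
  have hsum : ∑ i ∈ Finset.range (d + 1), (m i : ℝ) * (p d).eval (lam i) * (p d).eval (lam i) =
      (p d).eval (lam 0) ^ 2 * S := by
    rw [hS, Finset.mul_sum]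
    refine Finset.sum_congr rfl fun i hi => ?_
    have h1 := hm i hi
    have h2 := hφ0 i hi
    field_simp
    linear_combination ((m i : ℝ) * (p d).eval (lam i) * φ i + (p d).eval (lam 0) * φ 0) *
      hkey i hi
  have hN := hnorm d le_rfl
  rw [ip, hsum] at hN
  have hqS : (p d).eval (lam 0) * S = n := by
    field_simp at hN
    linarith
  have hS0 : S ≠ 0 := by
    rintro h
    rw [h, mul_zero] at hqS
    exact hnR hqS.symm
  rw [← hqS]
  field_simp
end

section
/- Let q_i = p_0 + p_1 + ⋯ + p_i for i = 0, …, d. Then 1 = q_0(λ0) < q_1(λ0) < ⋯ < q_d(λ0) = n, and moreover q_d(λ_i) = 0 for every i = 1, …, d. -/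
/-!
Evaluating `p_0, …, p_d` at the eigenvalues gives a square matrix `P = (p_i(λ_j))`. With
`W = diag(m_j / n)` and `D = diag(p_i(λ_0))`, orthogonality and the normalization say
`P W Pᵀ = D`. Each `p_i(λ_0)` is positive: it is a sum of squares, and it vanishes only if `p_i`,
of degree `i ≤ d`, has the `d + 1` roots `λ_0, …, λ_d`. This already makes `q_i(λ_0)` strictly
increasing. As `D` is invertible, `D⁻¹ P W` is a left inverse of the square matrix `Pᵀ`, hence also
a right inverse: `Pᵀ D⁻¹ P W = 1` (`dual_orthogonality`). In row `0` the factors `p_i(λ_0)` cancel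
against `D⁻¹`, which leaves `q_d(λ_k) · m_k / n = δ_{0k}`. Finally `p_0 = 1` because
`Σ m_i = n`, the degree of the characteristic polynomial.
-/

open Polynomial Finset

lemma sum_mult_eq {V : Type} [Fintype V] [DecidableEq V] (A : Matrix V V ℝ) (d : ℕ)
    (lam : ℕ → ℝ) (m : ℕ → ℕ)
    (hchar : A.charpoly = ∏ i ∈ Finset.range (d + 1), (X - C (lam i)) ^ m i) :
    ∑ i ∈ Finset.range (d + 1), m i = Fintype.card V := by
  rw [← A.charpoly_natDegree_eq_dim, hchar, natDegree_prod_of_monic]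
  · simp
  · exact fun i _ => (monic_X_sub_C _).pow _

lemma ip_self_pos {n d : ℕ} {m : ℕ → ℕ} {lam : ℕ → ℝ} (hn : 0 < n)
    (hlam : ∀ i j : ℕ, i < j → j ≤ d → lam j < lam i) (hmpos : ∀ i ≤ d, 0 < m i)
    {f : ℝ[X]} (hf : f ≠ 0) (hfd : f.natDegree ≤ d) : 0 < ip n d m lam f f := by
  have hterm : ∀ i ∈ Finset.range (d + 1),
      0 ≤ (m i : ℝ) * f.eval (lam i) * f.eval (lam i) := fun i _ => by
    rw [mul_assoc]; exact mul_nonneg (Nat.cast_nonneg _) (mul_self_nonneg _)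
  refine mul_pos (by positivity) (lt_of_le_of_ne (Finset.sum_nonneg hterm) fun h0 => hf ?_)
  have hz := (Finset.sum_eq_zero_iff_of_nonneg hterm).1 h0.symm
  have hinj : Set.InjOn lam (Finset.range (d + 1)) := by
    intro i hi j hj hij
    simp only [Finset.coe_range, Set.mem_Iio] at hi hj
    rcases lt_trichotomy i j with h | h | h
    · exact absurd hij (hlam i j h (by omega)).ne'
    · exact h
    · exact absurd hij (hlam j i h (by omega)).ne
  refine eq_zero_of_natDegree_lt_card_of_eval_eq_zero' f ((Finset.range (d + 1)).image lam) ?_ ?_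
  · intro x hx
    obtain ⟨i, hi, rfl⟩ := Finset.mem_image.1 hx
    have hmi := hmpos i (by simpa [Nat.lt_succ_iff] using hi)
    have := hz i hi
    simpa [hmi.ne'] using this
  · rw [Finset.card_image_of_injOn hinj, Finset.card_range]; omega

/-- The column orthogonality relations of the matrix `(p_i(λ_j))`, dual to the orthogonality of
the polynomials `p_i` (its rows). -/
lemma dual_orthogonality {n d : ℕ} {m : ℕ → ℕ} {lam : ℕ → ℝ} {p : ℕ → ℝ[X]}
    (horth : ∀ i ≤ d, ∀ j ≤ d, i ≠ j → ip n d m lam (p i) (p j) = 0)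
    (hpos : ∀ i ≤ d, ip n d m lam (p i) (p i) ≠ 0) (j k : Fin (d + 1)) :
    ∑ i : Fin (d + 1), (p i).eval (lam j) *
      ((ip n d m lam (p i) (p i))⁻¹ * ((n : ℝ)⁻¹ * m k * (p i).eval (lam k))) =
      if j = k then 1 else 0 := by
  let B : Matrix (Fin (d + 1)) (Fin (d + 1)) ℝ := fun j i => (p i).eval (lam j)
  let L : Matrix (Fin (d + 1)) (Fin (d + 1)) ℝ := fun i k =>
    (ip n d m lam (p i) (p i))⁻¹ * ((n : ℝ)⁻¹ * m k * (p i).eval (lam k))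
  have hLB : L * B = 1 := by
    ext a b
    have h1 : (L * B) a b =
        (ip n d m lam (p a) (p a))⁻¹ * ip n d m lam (p a) (p b) := by
      rw [Matrix.mul_apply]
      conv_rhs => rw [ip.eq_1 n d m lam (p a) (p b), Finset.sum_range, Finset.mul_sum,
        Finset.mul_sum]
      exact Finset.sum_congr rfl fun x _ => by simp only [L, B]; ring
    rw [h1, Matrix.one_apply]
    split_ifs with hab
    · subst hab; exact inv_mul_cancel₀ (hpos a (by omega))
    · rw [horth a (by omega) b (by omega) (fun h => hab (Fin.ext h)), mul_zero]
  have hBL : B * L = 1 := mul_eq_one_comm.1 hLB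
  have := congrFun (congrFun hBL j) k
  rwa [Matrix.mul_apply, Matrix.one_apply] at this

theorem stmt_4
    (V : Type) [Fintype V] [DecidableEq V] (G : SimpleGraph V) [DecidableRel G.Adj]
    (hconn : G.Connected) (n d : ℕ) (hn : Fintype.card V = n)
    (lam : ℕ → ℝ) (m : ℕ → ℕ)
    (hchar : (G.adjMatrix ℝ).charpoly =
      ∏ i ∈ Finset.range (d + 1), (Polynomial.X - Polynomial.C (lam i)) ^ m i)
    (hlam : ∀ i j : ℕ, i < j → j ≤ d → lam j < lam i)
    (hm0 : m 0 = 1) (hmpos : ∀ i ≤ d, 0 < m i)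
    (p : ℕ → Polynomial ℝ)
    (hdeg : ∀ i ≤ d, (p i).degree = (i : ℕ))
    (horth : ∀ i ≤ d, ∀ j ≤ d, i ≠ j → ip n d m lam (p i) (p j) = 0)
    (hnorm : ∀ i ≤ d, ip n d m lam (p i) (p i) = (p i).eval (lam 0))
    (q : ℕ → Polynomial ℝ) (hq : ∀ i, q i = ∑ j ∈ Finset.range (i + 1), p j) :
    (q 0).eval (lam 0) = 1 ∧
    (∀ i, i < d → (q i).eval (lam 0) < (q (i + 1)).eval (lam 0)) ∧
    (q d).eval (lam 0) = (n : ℝ) ∧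
    (∀ i, 1 ≤ i → i ≤ d → (q d).eval (lam i) = 0) := by
  have hn0 : 0 < n := by
    have := hconn.nonempty
    rw [← hn]; exact Fintype.card_pos
  have hnR : (n : ℝ) ≠ 0 := by positivity
  have hsum : ∑ i ∈ Finset.range (d + 1), m i = n := by
    rw [← hn]; exact sum_mult_eq _ d lam m hchar
  have hippos : ∀ i ≤ d, 0 < ip n d m lam (p i) (p i) := fun i hi => by
    refine ip_self_pos hn0 hlam hmpos (fun h => ?_) ?_
    · have := hdeg i hi
      simp [h] at this
    · rw [natDegree_eq_of_degree_eq_some (hdeg i hi)]; exact hi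
  have hpos : ∀ i ≤ d, 0 < (p i).eval (lam 0) := fun i hi => hnorm i hi ▸ hippos i hi
  have hqd : ∀ k ≤ d, (n : ℝ)⁻¹ * m k * (q d).eval (lam k) = if 0 = k then 1 else 0 := by
    intro k hk
    have h := dual_orthogonality horth (fun i hi => (hippos i hi).ne') 0 ⟨k, by omega⟩
    simp only [Fin.ext_iff, Fin.val_zero] at h
    rw [← h, hq, eval_finsetSum, Finset.mul_sum, Finset.sum_range]
    refine Finset.sum_congr rfl fun i _ => ?_
    have hi : (i : ℕ) ≤ d := by omega
    rw [hnorm i hi, mul_inv_cancel_left₀ (hpos i hi).ne']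
  refine ⟨?_, ?_, ?_, ?_⟩
  · have h0 := hnorm 0 (Nat.zero_le d)
    have hp0 := hpos 0 (Nat.zero_le d)
    obtain ⟨c, hc⟩ : ∃ c, p 0 = C c :=
      ⟨_, eq_C_of_degree_le_zero (hdeg 0 (Nat.zero_le d)).le⟩
    have hsumR : ∑ i ∈ Finset.range (d + 1), (m i : ℝ) = n := by exact_mod_cast hsum
    simp only [hc, ip, eval_C, ← Finset.sum_mul, hsumR] at h0 hp0
    -- The normalization of the constant `p_0 = c` reads `c² = c`.
    have hcc : c * c = c := by rwa [mul_assoc, inv_mul_cancel_left₀ hnR] at h0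
    simp only [hq, zero_add, Finset.sum_range_one, hc, eval_C]
    exact mul_left_cancel₀ hp0.ne' (hcc.trans (mul_one c).symm)
  · intro i hi
    rw [hq (i + 1), Finset.sum_range_succ, ← hq i, eval_add]
    exact lt_add_of_pos_right _ (hpos (i + 1) hi)
  · have h := hqd 0 (Nat.zero_le d)
    rw [hm0] at h
    simp only [Nat.cast_one, mul_one, if_true] at h
    exact ((inv_mul_eq_one₀ hnR).1 h).symm
  · intro i hi hid
    have h := hqd i hid
    rw [if_neg (by omega)] at h
    have hmi : (m i : ℝ) ≠ 0 := by exact_mod_cast (hmpos i hid).ne'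
    exact (mul_eq_zero.1 h).resolve_left (mul_ne_zero (inv_ne_zero hnR) hmi)
end

section
/- The Hoffman polynomial H = p_0 + p_1 + ⋯ + p_d has exactly d distinct real zeros, and these zeros are precisely the eigenvalues λ1, …, λd of Γ distinct from the spectral radius λ0. -/
/-!
The polynomial `H = p_0 + ⋯ + p_d` represents evaluation at `λ_0` on polynomials of degree at
most `d`: `⟨H, f⟩ = f(λ_0)`. By orthogonality and the normalization this holds for `f = p_i`, and
the `p_i` span that space (`ip_sum_eq_eval`). Testing against `q_j = ∏_{k ≠ j} (X - λ_k)` with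
`j ≥ 1` leaves a single term of the inner product, `(m_j / n) H(λ_j) q_j(λ_j) = q_j(λ_0) = 0`,
so `H(λ_j) = 0`. As `H` has degree `d`, the `d` distinct numbers `λ_1, …, λ_d` are all its roots.
-/

open Polynomial Finset

lemma ip_add_right (n d : ℕ) (m : ℕ → ℕ) (lam : ℕ → ℝ) (f g h : Polynomial ℝ) :
    ip n d m lam f (g + h) = ip n d m lam f g + ip n d m lam f h := by
  simp only [ip, eval_add, mul_add, Finset.sum_add_distrib]

lemma ip_C_mul_right (n d : ℕ) (m : ℕ → ℕ) (lam : ℕ → ℝ) (c : ℝ) (f g : Polynomial ℝ) :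
    ip n d m lam f (C c * g) = c * ip n d m lam f g := by
  simp only [ip, eval_mul, eval_C, Finset.mul_sum]
  exact Finset.sum_congr rfl fun i _ => by ring

lemma ip_sum_left (n d : ℕ) (m : ℕ → ℕ) (lam : ℕ → ℝ) (s : Finset ℕ) (p : ℕ → Polynomial ℝ)
    (g : Polynomial ℝ) :
    ip n d m lam (∑ i ∈ s, p i) g = ∑ i ∈ s, ip n d m lam (p i) g := by
  simp only [ip, eval_finsetSum, ← Finset.mul_sum]
  rw [Finset.sum_comm]
  simp only [Finset.mul_sum, Finset.sum_mul]

/-- The reproducing property of `p_0 + ⋯ + p_d`, by induction on a degree bound: subtracting a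
multiple of `p_k` removes the coefficient of `X ^ k`. -/
lemma ip_sum_eq_eval (n d : ℕ) (m : ℕ → ℕ) (lam : ℕ → ℝ) (p : ℕ → Polynomial ℝ)
    (hdeg : ∀ i ≤ d, (p i).degree = (i : ℕ))
    (horth : ∀ i ≤ d, ∀ j ≤ d, i ≠ j → ip n d m lam (p i) (p j) = 0)
    (hnorm : ∀ i ≤ d, ip n d m lam (p i) (p i) = (p i).eval (lam 0))
    (k : ℕ) (hk : k ≤ d + 1) (f : Polynomial ℝ) (hf : f.degree < (k : ℕ)) :
    ip n d m lam (∑ i ∈ Finset.range (d + 1), p i) f = f.eval (lam 0) := by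
  induction k generalizing f with
  | zero =>
    have h0 : f = 0 := by
      ext j
      exact (degree_lt_iff_coeff_zero f 0).1 hf j (Nat.zero_le j)
    simp [h0, ip]
  | succ k ih =>
    have hkd : k ≤ d := by omega
    have hpk : ip n d m lam (∑ i ∈ Finset.range (d + 1), p i) (p k) = (p k).eval (lam 0) := by
      rw [ip_sum_left, Finset.sum_eq_single k, hnorm k hkd]
      · intro i hi hik
        exact horth i (by simpa [Nat.lt_succ_iff] using hi) k hkd hik
      · intro h
        exact absurd (Finset.mem_range.2 (by omega)) h
    have hlead : (p k).coeff k ≠ 0 := coeff_ne_zero_of_eq_degree (hdeg k hkd)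
    set c := f.coeff k / (p k).coeff k with hc
    have hr : (f + C (-c) * p k).degree < (k : ℕ) := by
      rw [degree_lt_iff_coeff_zero]
      intro j hj
      rw [coeff_add, coeff_C_mul]
      rcases hj.eq_or_lt with rfl | hj
      · rw [hc]; field_simp; ring
      · rw [(degree_lt_iff_coeff_zero f (k + 1)).1 hf j hj,
          coeff_eq_zero_of_degree_lt (by rw [hdeg k hkd]; exact_mod_cast hj)]
        ring
    have h := ih (by omega) _ hr
    rw [ip_add_right, ip_C_mul_right, hpk, eval_add, eval_mul, eval_C] at h
    linarith

theorem stmt_5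
    (V : Type) [Fintype V] [DecidableEq V] (G : SimpleGraph V) [DecidableRel G.Adj]
    (hconn : G.Connected) (n d : ℕ) (hn : Fintype.card V = n)
    (lam : ℕ → ℝ) (m : ℕ → ℕ)
    (hchar : (G.adjMatrix ℝ).charpoly =
      ∏ i ∈ Finset.range (d + 1), (Polynomial.X - Polynomial.C (lam i)) ^ m i)
    (hlam : ∀ i j : ℕ, i < j → j ≤ d → lam j < lam i)
    (hm0 : m 0 = 1) (hmpos : ∀ i ≤ d, 0 < m i)
    (p : ℕ → Polynomial ℝ)
    (hdeg : ∀ i ≤ d, (p i).degree = (i : ℕ))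
    (horth : ∀ i ≤ d, ∀ j ≤ d, i ≠ j → ip n d m lam (p i) (p j) = 0)
    (hnorm : ∀ i ≤ d, ip n d m lam (p i) (p i) = (p i).eval (lam 0))
    (H : Polynomial ℝ) (hH : H = ∑ i ∈ Finset.range (d + 1), p i) :
    {x : ℝ | H.eval x = 0} = (fun i => lam i) '' {i : ℕ | 1 ≤ i ∧ i ≤ d} ∧
    Set.ncard {x : ℝ | H.eval x = 0} = d := by
  have : Nonempty V := hconn.nonempty
  have hn0 : (n : ℝ) ≠ 0 := by
    rw [← hn]
    exact_mod_cast Fintype.card_ne_zero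
  have hinj : Set.InjOn lam (Finset.range (d + 1)) := by
    intro i hi j hj hij
    simp only [Finset.coe_range, Set.mem_Iio] at hi hj
    rcases lt_trichotomy i j with h | h | h
    · exact absurd hij (hlam i j h (by omega)).ne'
    · exact h
    · exact absurd hij (hlam j i h (by omega)).ne
  have hroot : ∀ j, 1 ≤ j → j ≤ d → H.eval (lam j) = 0 := by
    intro j hj1 hjd
    have hjmem : j ∈ Finset.range (d + 1) := Finset.mem_range.2 (by omega)
    set q : Polynomial ℝ := ∏ k ∈ (Finset.range (d + 1)).erase j, (X - C (lam k)) with hq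
    have hqeval : ∀ k ∈ Finset.range (d + 1), k ≠ j → q.eval (lam k) = 0 := by
      intro k hk hkj
      rw [hq, eval_prod]
      exact Finset.prod_eq_zero (Finset.mem_erase.2 ⟨hkj, hk⟩) (by simp)
    have hqj : q.eval (lam j) ≠ 0 := by
      rw [hq, eval_prod, Finset.prod_ne_zero_iff]
      intro k hk
      rw [Finset.mem_erase] at hk
      simp only [eval_sub, eval_X, eval_C, sub_ne_zero]
      exact fun h => hk.1 (hinj (by simpa using hk.2) (by simpa using hjmem) h.symm)
    have hqdeg : q.degree < ((d + 1 : ℕ) : WithBot ℕ) := by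
      rw [hq, degree_prod]
      simp only [degree_X_sub_C, Finset.sum_const, Finset.card_erase_of_mem hjmem,
        Finset.card_range, nsmul_eq_mul, mul_one]
      exact_mod_cast Nat.lt_succ_self d
    have h := ip_sum_eq_eval n d m lam p hdeg horth hnorm (d + 1) le_rfl q hqdeg
    rw [← hH, hqeval 0 (by simp) (by omega), ip, Finset.sum_eq_single j] at h
    · have hmj : (m j : ℝ) ≠ 0 := by exact_mod_cast (hmpos j hjd).ne'
      simpa [hn0, hmj, hqj] using h
    · intro k hk hkj
      rw [hqeval k hk hkj, mul_zero]
    · exact fun h' => absurd hjmem h'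
  have hcoeff : H.coeff d ≠ 0 := by
    rw [hH, finsetSum_coeff, Finset.sum_range_succ, Finset.sum_eq_zero, zero_add]
    · exact coeff_ne_zero_of_eq_degree (hdeg d le_rfl)
    · intro i hi
      rw [Finset.mem_range] at hi
      exact coeff_eq_zero_of_degree_lt (by rw [hdeg i hi.le]; exact_mod_cast hi)
  have hH0 : H ≠ 0 := by
    rintro h
    simp [h] at hcoeff
  have hdegH : H.natDegree ≤ d := by
    rw [hH]
    refine natDegree_sum_le_of_forall_le _ _ fun i hi => ?_
    have hid : i ≤ d := by simpa [Nat.lt_succ_iff] using hi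
    rw [natDegree_eq_of_degree_eq_some (hdeg i hid)]
    exact hid
  have hset : {x : ℝ | H.eval x = 0} = (H.roots.toFinset : Set ℝ) := by
    ext x
    simp [hH0]
  have himg : (fun i => lam i) '' {i : ℕ | 1 ≤ i ∧ i ≤ d} =
      ((Finset.Icc 1 d).image lam : Set ℝ) := by
    ext x
    simp
  have hcard : ((Finset.Icc 1 d).image lam).card = d := by
    rw [Finset.card_image_of_injOn (hinj.mono ?_), Nat.card_Icc, Nat.add_sub_cancel]
    intro i hi
    simp only [Finset.coe_Icc, Set.mem_Icc, Finset.coe_range, Set.mem_Iio] at hi ⊢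
    omega
  have heq : (Finset.Icc 1 d).image lam = H.roots.toFinset := by
    apply Finset.eq_of_subset_of_card_le
    · intro x hx
      obtain ⟨i, hi, rfl⟩ := Finset.mem_image.1 hx
      rw [Finset.mem_Icc] at hi
      simp [hH0, hroot i hi.1 hi.2]
    · rw [hcard]
      exact (Multiset.toFinset_card_le _).trans ((card_roots' H).trans hdegH)
  rw [hset, himg, ← heq]
  exact ⟨rfl, by rw [Set.ncard_coe_finset, hcard]⟩
end

section
/- If d ≥ 2, the spectral radius of Γ can be recovered from the coefficients of the predistance polynomials as λ0 = −(ω_1^1 · ω_2^0)/ω_2^2. -/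
/-!
Write `M k = (1/n) Σ mᵢ λᵢᵏ`. The degree of the characteristic polynomial gives `M 0 = 1`, and the
vanishing trace of the adjacency matrix gives `M 1 = 0`. Since `p 0` is a nonzero constant,
orthogonality of `p 1` to `p 0` forces `p 1 = ω₁¹ x`, and the normalization of `p 1` reads
`ω₁¹ M 2 = λ₀`. Orthogonality of `p 2` to `p 0` reads `ω₂² M 2 + ω₂⁰ = 0`; eliminating `M 2`
from the last two identities gives the formula.
-/

open Polynomial Finset

theorem stmt_6
    (V : Type) [Fintype V] [DecidableEq V] (G : SimpleGraph V) [DecidableRel G.Adj]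
    (hconn : G.Connected) (n d : ℕ) (hn : Fintype.card V = n)
    (lam : ℕ → ℝ) (m : ℕ → ℕ)
    (hchar : (G.adjMatrix ℝ).charpoly =
      ∏ i ∈ Finset.range (d + 1), (Polynomial.X - Polynomial.C (lam i)) ^ m i)
    (hlam : ∀ i j : ℕ, i < j → j ≤ d → lam j < lam i)
    (hm0 : m 0 = 1) (hmpos : ∀ i ≤ d, 0 < m i)
    (p : ℕ → Polynomial ℝ)
    (hdeg : ∀ i ≤ d, (p i).degree = (i : ℕ))
    (horth : ∀ i ≤ d, ∀ j ≤ d, i ≠ j → ip n d m lam (p i) (p j) = 0)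
    (hnorm : ∀ i ≤ d, ip n d m lam (p i) (p i) = (p i).eval (lam 0))
    (hd : 2 ≤ d) :
    lam 0 = -((p 1).coeff 1 * (p 2).coeff 0) / (p 2).coeff 2 := by
  have hsum : (∑ i ∈ Finset.range (d + 1), (m i : ℝ)) = n := by
    have h := congrArg Polynomial.natDegree hchar
    rw [Matrix.charpoly_natDegree_eq_dim, hn, Polynomial.natDegree_prod_of_monic _ _
      (fun i _ => (Polynomial.monic_X_sub_C (lam i)).pow (m i))] at h
    simp only [Polynomial.natDegree_pow, Polynomial.natDegree_X_sub_C, mul_one] at h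
    rw [h]
    push_cast
    rfl
  have htr : (∑ i ∈ Finset.range (d + 1), (m i : ℝ) * lam i) = 0 := by
    have h := congrArg Polynomial.nextCoeff hchar
    have := hconn.nonempty
    have h2 := Matrix.trace_eq_neg_charpoly_nextCoeff (G.adjMatrix ℝ)
    rw [SimpleGraph.trace_adjMatrix] at h2
    rw [Polynomial.Monic.nextCoeff_prod _ _
      (fun i _ => (Polynomial.monic_X_sub_C (lam i)).pow (m i))] at h
    simp only [(Polynomial.monic_X_sub_C _).nextCoeff_pow, Polynomial.nextCoeff_X_sub_C,
      nsmul_eq_mul, mul_neg, Finset.sum_neg_distrib] at h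
    linarith
  have hn0 : (n : ℝ) ≠ 0 := by
    have := hconn.nonempty
    rw [← hn]
    exact_mod_cast Fintype.card_ne_zero
  have e0 := Polynomial.eq_C_of_degree_eq_zero (hdeg 0 (by omega))
  have e1 := Polynomial.eq_X_add_C_of_degree_le_one (hdeg 1 (by omega)).le
  have e2 : p 2 = C ((p 2).coeff 2) * X ^ 2 + C ((p 2).coeff 1) * X + C ((p 2).coeff 0) :=
    Polynomial.eq_quadratic_of_degree_le_two (hdeg 2 hd).le
  have c0 : (p 0).coeff 0 ≠ 0 :=
    Polynomial.coeff_ne_zero_of_eq_degree (hdeg 0 (by omega))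
  have c1 : (p 1).coeff 1 ≠ 0 :=
    Polynomial.coeff_ne_zero_of_eq_degree (hdeg 1 (by omega))
  have c2 : (p 2).coeff 2 ≠ 0 :=
    Polynomial.coeff_ne_zero_of_eq_degree (hdeg 2 hd)
  have o10 := horth 1 (by omega) 0 (by omega) (by omega)
  have o20 := horth 2 hd 0 (by omega) (by omega)
  have n1 := hnorm 1 (by omega)
  generalize (p 0).coeff 0 = c at *
  generalize (p 1).coeff 1 = a at *
  generalize (p 1).coeff 0 = b at *
  generalize (p 2).coeff 2 = u at *
  generalize (p 2).coeff 1 = v at *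
  generalize (p 2).coeff 0 = w at *
  simp only [ip, e0, e1, e2, eval_add, eval_mul, eval_C, eval_X, eval_pow] at o10 o20 n1
  have s10 : ∑ i ∈ Finset.range (d + 1), (m i : ℝ) * (a * lam i + b) * c = n * b * c := by
    calc _ = a * c * (∑ i ∈ Finset.range (d + 1), (m i : ℝ) * lam i)
          + b * c * ∑ i ∈ Finset.range (d + 1), (m i : ℝ) := by
          simp only [Finset.mul_sum, ← Finset.sum_add_distrib]
          exact Finset.sum_congr rfl fun i _ => by ring
      _ = _ := by rw [hsum, htr]; ring
  rw [s10] at o10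
  have hb : b = 0 := by simpa [hn0, c0] using o10
  subst hb
  -- `S` is `n` times the second spectral moment, the quantity eliminated at the end.
  set S := ∑ i ∈ Finset.range (d + 1), (m i : ℝ) * lam i ^ 2 with hS
  have s20 : ∑ i ∈ Finset.range (d + 1),
      (m i : ℝ) * (u * lam i ^ 2 + v * lam i + w) * c = c * (u * S + n * w) := by
    calc _ = u * c * S + v * c * (∑ i ∈ Finset.range (d + 1), (m i : ℝ) * lam i)
          + w * c * ∑ i ∈ Finset.range (d + 1), (m i : ℝ) := by
          simp only [hS, Finset.mul_sum, ← Finset.sum_add_distrib]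
          exact Finset.sum_congr rfl fun i _ => by ring
      _ = _ := by rw [hsum, htr]; ring
  rw [s20] at o20
  have h20 : u * S + n * w = 0 := by simpa [hn0, c0] using o20
  have s11 : ∑ i ∈ Finset.range (d + 1),
      (m i : ℝ) * (a * lam i + 0) * (a * lam i + 0) = a * (a * S) := by
    simp only [hS, Finset.mul_sum]
    exact Finset.sum_congr rfl fun i _ => by ring
  rw [s11] at n1
  have h11 : a * S = n * lam 0 := by
    field_simp at n1
    apply mul_left_cancel₀ c1
    linarith
  rw [eq_div_iff c2]
  apply mul_left_cancel₀ hn0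
  linear_combination a * h20 - u * h11
end

section
/- Γ is bipartite if and only if α_0 = α_1 = ⋯ = α_d = 0. -/
/-!
Write `L f = Σ m_i f(λ_i) = tr f(A)`. A graph is bipartite iff it has no closed walk of odd length,
that is, iff every odd moment `L(x^(2j+1)) = tr A^(2j+1)` vanishes (`two_colorable_iff_odd_traces`).
Because `L(x) = tr A = 0`, the polynomial `p_1` is a nonzero multiple of `x`, so `α_i = 0` iff
`L(x p_i²) = 0` (`alph_eq_zero_iff`).

It remains to compare these two conditions (`diag_eq_zero_iff_odd_moments`). If the odd moments of
order less than `2k` vanish, uniqueness of orthogonal polynomials forces `p_k(-x) = (-1)^k p_k(x)`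
(`comp_neg_of_moments`), so `x p_k²` is an odd polynomial of degree `2k + 1`. Hence if all odd moments
vanish, so does every `L(x p_k²)`. Conversely, if every `L(x p_k²)` vanishes, then by induction
the odd moments up to order `2d + 1` vanish, and these determine all the others because `L` is
supported on `d + 1` points (`odd_moments_of_le`).
-/

open Polynomial Finset

/-- The linear functional `f ↦ Σ_{i ≤ d} m_i f(λ_i)`; it sends `f` to `tr f(A)` when the `λ_i`, `m_i`
are the eigenvalues of `A` and their multiplicities, and `ip n d m lam f g` is `n⁻¹` times its value
at `f * g`. -/
noncomputable def specFun (d : ℕ) (m : ℕ → ℕ) (lam : ℕ → ℝ) : ℝ[X] →ₗ[ℝ] ℝ :=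
  ∑ i ∈ range (d + 1), (m i : ℝ) • Polynomial.leval (lam i)

lemma specFun_apply (d : ℕ) (m : ℕ → ℕ) (lam : ℕ → ℝ) (f : ℝ[X]) :
    specFun d m lam f = ∑ i ∈ range (d + 1), (m i : ℝ) * f.eval (lam i) := by
  simp [specFun, LinearMap.sum_apply]

lemma ip_eq_specFun (n d : ℕ) (m : ℕ → ℕ) (lam : ℕ → ℝ) (f g : ℝ[X]) :
    ip n d m lam f g = (n : ℝ)⁻¹ * specFun d m lam (f * g) := by
  simp [ip, specFun_apply, mul_assoc]

/-- A polynomial of degree at most `d` is determined by its values on the `d + 1` eigenvalues, so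
`specFun` is definite on such polynomials. -/
lemma eq_zero_of_specFun_sq {d : ℕ} {m : ℕ → ℕ} {lam : ℕ → ℝ}
    (hlam : ∀ i j : ℕ, i < j → j ≤ d → lam j < lam i) (hmpos : ∀ i ≤ d, 0 < m i)
    {f : ℝ[X]} (hf : f.degree < (d + 1 : ℕ)) (h : specFun d m lam (f * f) = 0) : f = 0 := by
  rw [specFun_apply, sum_eq_zero_iff_of_nonneg] at h
  · refine Polynomial.eq_zero_of_degree_lt_of_eval_index_eq_zero (s := range (d + 1)) (v := lam) ?_
      (by simpa using hf) ?_
    · intro i hi j hj hij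
      simp only [coe_range, Set.mem_Iio] at hi hj
      rcases lt_trichotomy i j with hlt | rfl | hlt
      · exact absurd hij (hlam i j hlt (by omega)).ne'
      · rfl
      · exact absurd hij (hlam j i hlt (by omega)).ne
    · intro i hi
      have h1 := h i hi
      have h2 : (m i : ℝ) ≠ 0 := by
        exact_mod_cast (hmpos i (by simpa [Nat.lt_succ_iff] using hi)).ne'
      simpa [h2] using h1
  · intro i _
    rw [eval_mul]
    exact mul_nonneg (Nat.cast_nonneg _) (mul_self_nonneg _)

/-- Since `p_0, …, p_{i-1}` span the polynomials of degree less than `i`, all of these are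
orthogonal to `p_i`. -/
lemma specFun_mul_eq_zero_of_degree_lt {d : ℕ} {m : ℕ → ℕ} {lam : ℕ → ℝ} {p : ℕ → ℝ[X]}
    (hdeg : ∀ i ≤ d, (p i).degree = (i : ℕ))
    (horth : ∀ i ≤ d, ∀ j ≤ d, i ≠ j → specFun d m lam (p i * p j) = 0)
    {i : ℕ} (hi : i ≤ d) {f : ℝ[X]} (hf : f.degree < (i : ℕ)) :
    specFun d m lam (p i * f) = 0 := by
  have key : ∀ k ≤ i, ∀ f : ℝ[X], f.degree < (k : ℕ) → specFun d m lam (p i * f) = 0 := by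
    intro k
    induction k with
    | zero =>
      intro _ f hf
      have : f = 0 := by
        rw [← degree_eq_bot]
        exact Nat.WithBot.lt_zero_iff.mp (by simpa using hf)
      simp [this]
    | succ k ih =>
      intro hk f hf
      have hpk : (p k).coeff k ≠ 0 := coeff_ne_zero_of_eq_degree (hdeg k (by omega))
      set c := f.coeff k / (p k).coeff k with hc
      have h1 : (f - C c * p k).degree < (k : ℕ) := by
        rw [degree_lt_iff_coeff_zero]
        intro j hj
        rcases hj.eq_or_lt with rfl | hj
        · simp [hc, hpk]
        · have h2 : f.coeff j = 0 := (degree_lt_iff_coeff_zero _ _).1 hf j hj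
          have h3 : (p k).coeff j = 0 := coeff_eq_zero_of_degree_lt (by
            rw [hdeg k (by omega)]; exact_mod_cast hj)
          simp [h2, h3]
      have h4 := ih (by omega) _ h1
      have h5 : p i * f = p i * (f - C c * p k) + c • (p i * p k) := by
        rw [smul_eq_C_mul]; ring
      rw [h5, map_add, map_smul, h4, horth i hi k (by omega) (by omega)]
      simp
  exact key i le_rfl f hf

/-- If the odd moments of order less than `2k` vanish, the functional is invariant under `x ↦ -x`
on polynomials of degree at most `2k`. -/
lemma specFun_comp_neg {d : ℕ} {m : ℕ → ℕ} {lam : ℕ → ℝ} {k : ℕ}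
    (h : ∀ j < k, specFun d m lam (X ^ (2 * j + 1)) = 0) {f : ℝ[X]}
    (hf : f.natDegree < 2 * k + 1) :
    specFun d m lam (f.comp (-X)) = specFun d m lam f := by
  rw [f.as_sum_range_C_mul_X_pow' hf, Polynomial.sum_comp, map_sum, map_sum]
  refine sum_congr rfl fun i hi => ?_
  rw [mem_range] at hi
  rw [C_mul_comp, X_pow_comp, ← smul_eq_C_mul, ← smul_eq_C_mul, map_smul, map_smul]
  rcases Nat.even_or_odd' i with ⟨j, rfl | rfl⟩
  · rw [Even.neg_pow (by simp)]
  · rw [Odd.neg_pow (by simp), map_neg, h j (by omega), neg_zero]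

/-- If the odd moments of order less than `2k` vanish, then `p_k` has the parity of `k`:
the polynomial `p_k(-x) - (-1)^k p_k(x)` has degree less than `k` and is orthogonal to itself. -/
lemma comp_neg_of_moments {d : ℕ} {m : ℕ → ℕ} {lam : ℕ → ℝ} {p : ℕ → ℝ[X]}
    (hlam : ∀ i j : ℕ, i < j → j ≤ d → lam j < lam i) (hmpos : ∀ i ≤ d, 0 < m i)
    (hdeg : ∀ i ≤ d, (p i).degree = (i : ℕ))
    (horth : ∀ i ≤ d, ∀ j ≤ d, i ≠ j → specFun d m lam (p i * p j) = 0)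
    {k : ℕ} (hk : k ≤ d) (h : ∀ j < k, specFun d m lam (X ^ (2 * j + 1)) = 0) :
    (p k).comp (-X) = C ((-1) ^ k) * p k := by
  have hnd : (p k).natDegree = k := natDegree_eq_of_degree_eq_some (hdeg k hk)
  have hp0 : p k ≠ 0 := fun h0 => by simpa [h0] using hdeg k hk
  have hone : ((-1 : ℝ) ^ k) ≠ 0 := by positivity
  rw [← sub_eq_zero]
  set q := (p k).comp (-X) - C ((-1) ^ k) * p k with hq
  have hqdeg : q.degree < (k : ℕ) := by
    have hk' : ((p k).comp (-X)).degree = (k : ℕ) := by rw [degree_comp_neg_X, hdeg k hk]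
    rw [← hk']
    refine degree_sub_lt_left ?_ ?_ ?_
    · rw [degree_comp_neg_X, degree_C_mul hone]
    · simpa using hp0
    · rw [comp_neg_X_leadingCoeff_eq, hnd, leadingCoeff_mul, leadingCoeff_C]
  have hqn : q.natDegree ≤ k := natDegree_le_of_degree_le hqdeg.le
  refine eq_zero_of_specFun_sq hlam hmpos (hqdeg.trans (by exact_mod_cast Nat.lt_succ_of_le hk)) ?_
  have h1 : q * q = (p k * q.comp (-X)).comp (-X) - ((-1 : ℝ) ^ k) • (p k * q) := by
    rw [mul_comp, comp_neg_X_comp_neg_X, smul_eq_C_mul, ← mul_assoc, ← sub_mul]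
  rw [h1, map_sub, map_smul, specFun_mul_eq_zero_of_degree_lt hdeg horth hk hqdeg,
    specFun_comp_neg h, specFun_mul_eq_zero_of_degree_lt hdeg horth hk (by simpa using hqdeg)]
  · simp
  · refine lt_of_le_of_lt natDegree_mul_le ?_
    have : (q.comp (-X)).natDegree = q.natDegree := by simp [natDegree_comp]
    omega

/-- Odd moments of order at most `2d + 1` determine the remaining ones: `x^(2j+1) = x·h(x²)`, and `h`
can be reduced modulo `∏ (y - λ_i²)`, which has degree `d + 1` and vanishes at every `λ_i²`. -/
lemma odd_moments_of_le {d : ℕ} {m : ℕ → ℕ} {lam : ℕ → ℝ}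
    (h : ∀ j ≤ d, specFun d m lam (X ^ (2 * j + 1)) = 0) (j : ℕ) :
    specFun d m lam (X ^ (2 * j + 1)) = 0 := by
  set M : ℝ[X] := ∏ i ∈ range (d + 1), (X - C (lam i ^ 2)) with hM
  have hMm : M.Monic := monic_prod_X_sub_C _ _
  have hMd : M.degree = (d + 1 : ℕ) := by
    rw [degree_eq_natDegree hMm.ne_zero, hM, natDegree_finsetProd_X_sub_C_eq_card]; simp
  set r := (X ^ j : ℝ[X]) %ₘ M with hr
  have hrd : r.natDegree < d + 1 := by
    have h1 : r.degree < (d + 1 : ℕ) := hMd ▸ degree_modByMonic_lt _ hMm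
    by_cases h0 : r = 0
    · simp [h0]
    · exact (natDegree_lt_iff_degree_lt h0).2 h1
  have h1 : specFun d m lam (X ^ (2 * j + 1)) = specFun d m lam (X * r.comp (X ^ 2)) := by
    rw [specFun_apply, specFun_apply]
    refine sum_congr rfl fun i hi => ?_
    have hMi : M.eval (lam i ^ 2) = 0 := by
      rw [hM, eval_prod]
      exact prod_eq_zero hi (by simp)
    have h2 := congrArg (eval (lam i ^ 2)) (modByMonic_add_div (X ^ j : ℝ[X]) M)
    rw [eval_add, eval_mul, hMi, zero_mul, add_zero, eval_pow, eval_X] at h2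
    rw [eval_mul, eval_comp]
    simp only [eval_pow, eval_X]
    rw [hr, h2]
    ring
  rw [h1, r.as_sum_range_C_mul_X_pow' hrd, Polynomial.sum_comp, mul_sum, map_sum]
  refine sum_eq_zero fun i hi => ?_
  have h3 : X * (C (r.coeff i) * X ^ i).comp (X ^ 2) = r.coeff i • (X ^ (2 * i + 1) : ℝ[X]) := by
    rw [C_mul_comp, X_pow_comp, smul_eq_C_mul]; ring
  rw [h3, map_smul, h i (by simpa [Nat.lt_succ_iff] using hi), smul_zero]

/-- The diagonal coefficients `⟨x p_i, p_i⟩` of the three-term recurrence all vanish exactly when all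
odd moments vanish. -/
lemma diag_eq_zero_iff_odd_moments {d : ℕ} {m : ℕ → ℕ} {lam : ℕ → ℝ} {p : ℕ → ℝ[X]}
    (hlam : ∀ i j : ℕ, i < j → j ≤ d → lam j < lam i) (hmpos : ∀ i ≤ d, 0 < m i)
    (hdeg : ∀ i ≤ d, (p i).degree = (i : ℕ))
    (horth : ∀ i ≤ d, ∀ j ≤ d, i ≠ j → specFun d m lam (p i * p j) = 0) :
    (∀ i ≤ d, specFun d m lam (X * p i * p i) = 0) ↔
      ∀ j, specFun d m lam (X ^ (2 * j + 1)) = 0 := by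
  -- Parity of `p_k` makes `x p_k²` an odd polynomial.
  have hodd : ∀ k ≤ d, (∀ j < k, specFun d m lam (X ^ (2 * j + 1)) = 0) →
      (X * p k * p k).comp (-X) = -(X * p k * p k) := by
    intro k hk h
    have hs : (C ((-1) ^ k) * C ((-1) ^ k) : ℝ[X]) = 1 := by
      rw [← C_mul, ← mul_pow]; simp
    rw [mul_comp, mul_comp, X_comp, comp_neg_of_moments hlam hmpos hdeg horth hk h]
    linear_combination (-X * p k * p k) * hs
  constructor
  · intro h
    refine odd_moments_of_le fun j => ?_
    induction j using Nat.strong_induction_on with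
    | _ k ih =>
    intro hk
    have ih' : ∀ j < k, specFun d m lam (X ^ (2 * j + 1)) = 0 := fun j hj => ih j hj (by omega)
    have hp0 : p k ≠ 0 := fun h0 => by simpa [h0] using hdeg k hk
    have hl : (p k).leadingCoeff ≠ 0 := leadingCoeff_ne_zero.2 hp0
    -- Cancelling the leading term of `x p_k²` leaves an odd polynomial of degree at most `2k`.
    set c := (p k).leadingCoeff * (p k).leadingCoeff with hc
    set g := X * p k * p k - C c * X ^ (2 * k + 1) with hg
    have hc0 : c ≠ 0 := mul_ne_zero hl hl
    have hD : (X * p k * p k : ℝ[X]).degree = (2 * k + 1 : ℕ) := by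
      rw [degree_mul, degree_mul, degree_X, hdeg k hk]
      norm_cast
      ring
    have hgd : g.degree < (2 * k + 1 : ℕ) := by
      rw [← hD]
      refine degree_sub_lt_left ?_ (by simp [hp0]) ?_
      · rw [hD, degree_C_mul_X_pow _ hc0]
      · rw [leadingCoeff_mul, leadingCoeff_mul, leadingCoeff_X, one_mul, leadingCoeff_C_mul_X_pow]
    have hgn : g.natDegree < 2 * k + 1 := by
      by_cases h0 : g = 0
      · simp [h0]
      · exact (natDegree_lt_iff_degree_lt h0).2 hgd
    have hgo : g.comp (-X) = -g := by
      rw [hg, sub_comp, hodd k hk ih', C_mul_comp, X_pow_comp, Odd.neg_pow (by simp)]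
      ring
    have hLg := specFun_comp_neg ih' hgn
    rw [hgo, map_neg] at hLg
    have hLg0 : specFun d m lam g = 0 := by linarith
    rw [hg, map_sub, h k hk, ← smul_eq_C_mul, map_smul, zero_sub, neg_eq_zero, smul_eq_mul] at hLg0
    exact (mul_eq_zero.1 hLg0).resolve_left hc0
  · intro h k hk
    have h1 := specFun_comp_neg (k := (X * p k * p k).natDegree) (fun j _ => h j)
      (f := X * p k * p k) (by omega)
    rw [hodd k hk fun j _ => h j, map_neg] at h1
    linarith

lemma trace_pow_eq_sum_eigenvalues {V : Type*} [Fintype V] [DecidableEq V] {A : Matrix V V ℝ}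
    (hA : A.IsHermitian) (k : ℕ) : (A ^ k).trace = ∑ v, hA.eigenvalues v ^ k := by
  conv_lhs => rw [hA.spectral_theorem, ← map_pow, Matrix.diagonal_pow]
  rw [Unitary.conjStarAlgAut_apply, Matrix.trace_mul_comm, ← mul_assoc, Unitary.coe_star_mul_self,
    one_mul, Matrix.trace_diagonal]
  simp

lemma specFun_X_pow_eq_trace {V : Type*} [Fintype V] [DecidableEq V] {A : Matrix V V ℝ}
    (hA : A.IsHermitian) {d : ℕ} {m : ℕ → ℕ} {lam : ℕ → ℝ}
    (hchar : A.charpoly = ∏ i ∈ range (d + 1), (X - C (lam i)) ^ m i) (k : ℕ) :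
    specFun d m lam (X ^ k) = (A ^ k).trace := by
  have h1 : (A.charpoly.roots.map (· ^ k)).sum = ∑ v, hA.eigenvalues v ^ k := by
    rw [hA.roots_charpoly_eq_eigenvalues, Multiset.map_map]
    rfl
  rw [trace_pow_eq_sum_eigenvalues hA, ← h1, hchar, roots_prod, Multiset.map_bind,
    Multiset.sum_bind, specFun_apply]
  · simp [roots_pow, roots_X_sub_C, Multiset.map_nsmul, Multiset.sum_nsmul, sum_range_succ,
      add_comm]
    rfl
  · exact prod_ne_zero_iff.2 fun i _ => pow_ne_zero _ (X_sub_C_ne_zero _)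

/-- The trace of `A ^ k` counts closed walks of length `k`, so it vanishes for all odd `k` exactly
when there is no odd closed walk. -/
lemma two_colorable_iff_odd_traces {V : Type*} [Fintype V] [DecidableEq V] (G : SimpleGraph V)
    [DecidableRel G.Adj] :
    G.Colorable 2 ↔ ∀ j, (G.adjMatrix ℝ ^ (2 * j + 1)).trace = 0 := by
  rw [SimpleGraph.two_colorable_iff_forall_loop_even]
  have key : ∀ k, (G.adjMatrix ℝ ^ k).trace = 0 ↔ ∀ u (w : G.Walk u u), w.length ≠ k := by
    intro k
    rw [Matrix.trace, sum_eq_zero_iff_of_nonneg]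
    · simp [SimpleGraph.adjMatrix_pow_apply_eq_card_walk, Finset.eq_empty_iff_forall_notMem,
        SimpleGraph.mem_finsetWalkLength_iff]
    · intro u _
      rw [Matrix.diag_apply, SimpleGraph.adjMatrix_pow_apply_eq_card_walk]
      positivity
  simp only [key]
  constructor
  · intro h j u w hw
    have := h u w
    rw [hw] at this
    exact absurd this (by simp)
  · intro h u w
    by_contra hw
    obtain ⟨j, hj⟩ := Nat.not_even_iff_odd.1 hw
    exact h j u w hj

/-- Since `tr A = 0`, the polynomial `p_1` is a nonzero multiple of `x`, so `α_i` vanishes exactly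
when `⟨x p_i, p_i⟩` does. -/
lemma alph_eq_zero_iff {n d : ℕ} {m : ℕ → ℕ} {lam : ℕ → ℝ} {p : ℕ → ℝ[X]} (hn : n ≠ 0)
    (hlam : ∀ i j : ℕ, i < j → j ≤ d → lam j < lam i) (hmpos : ∀ i ≤ d, 0 < m i)
    (hdeg : ∀ i ≤ d, (p i).degree = (i : ℕ))
    (horth : ∀ i ≤ d, ∀ j ≤ d, i ≠ j → specFun d m lam (p i * p j) = 0)
    (hd : 1 ≤ d) (htr : specFun d m lam X = 0) {i : ℕ} (hi : i ≤ d) :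
    alph n d m lam p i = 0 ↔ specFun d m lam (X * p i * p i) = 0 := by
  have hp0 : p i ≠ 0 := fun h0 => by simpa [h0] using hdeg i hi
  have hsq : specFun d m lam (p i * p i) ≠ 0 := fun h0 => hp0 <|
    eq_zero_of_specFun_sq hlam hmpos
      (by rw [hdeg i hi]; exact_mod_cast Nat.lt_succ_of_le hi) h0
  have h1 : p 1 = C ((p 1).coeff 1) * X := by
    have h2 := comp_neg_of_moments hlam hmpos hdeg horth hd (k := 1) (by simpa using htr)
    have h3 := eq_X_add_C_of_degree_le_one (hdeg 1 hd).le
    have h4 : (p 1).coeff 0 = 0 := by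
      have h5 := congrArg (eval 0) h2
      simp only [eval_comp, eval_neg, eval_X, neg_zero, eval_mul, eval_C, pow_one] at h5
      rw [coeff_zero_eq_eval_zero]
      linarith
    rwa [h4, C_0, add_zero] at h3
  have hc : (p 1).coeff 1 ≠ 0 := coeff_ne_zero_of_eq_degree (hdeg 1 hd)
  have h6 : p 1 * p i * p i = (p 1).coeff 1 • (X * p i * p i) := by
    rw [smul_eq_C_mul]
    linear_combination (p i * p i) * h1
  rw [alph, xi, ip_eq_specFun, ip_eq_specFun, h6, map_smul]
  simp [hsq, hc, hn]

theorem stmt_14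
    (V : Type) [Fintype V] [DecidableEq V] (G : SimpleGraph V) [DecidableRel G.Adj]
    (hconn : G.Connected) (n d : ℕ) (hn : Fintype.card V = n)
    (lam : ℕ → ℝ) (m : ℕ → ℕ)
    (hchar : (G.adjMatrix ℝ).charpoly =
      ∏ i ∈ Finset.range (d + 1), (Polynomial.X - Polynomial.C (lam i)) ^ m i)
    (hlam : ∀ i j : ℕ, i < j → j ≤ d → lam j < lam i)
    (hm0 : m 0 = 1) (hmpos : ∀ i ≤ d, 0 < m i)
    (p : ℕ → Polynomial ℝ)
    (hdeg : ∀ i ≤ d, (p i).degree = (i : ℕ))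
    (horth : ∀ i ≤ d, ∀ j ≤ d, i ≠ j → ip n d m lam (p i) (p j) = 0)
    (hnorm : ∀ i ≤ d, ip n d m lam (p i) (p i) = (p i).eval (lam 0))
    (hd : 1 ≤ d) :
    G.Colorable 2 ↔ ∀ i ≤ d, alph n d m lam p i = 0 := by
  have hA : (G.adjMatrix ℝ).IsHermitian := by
    rw [Matrix.IsHermitian, Matrix.conjTranspose_eq_transpose_of_trivial]
    exact SimpleGraph.transpose_adjMatrix G
  have hn0 : n ≠ 0 := by
    have := hconn.nonempty
    rw [← hn]
    exact Fintype.card_ne_zero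
  have horth' : ∀ i ≤ d, ∀ j ≤ d, i ≠ j → specFun d m lam (p i * p j) = 0 := by
    intro i hi j hj hij
    have h1 := horth i hi j hj hij
    rw [ip_eq_specFun] at h1
    exact (mul_eq_zero.1 h1).resolve_left (inv_ne_zero (Nat.cast_ne_zero.2 hn0))
  have htr : specFun d m lam X = 0 := by
    have h1 := specFun_X_pow_eq_trace hA hchar 1
    rw [pow_one, pow_one, SimpleGraph.trace_adjMatrix] at h1
    exact h1
  rw [two_colorable_iff_odd_traces]
  simp only [← specFun_X_pow_eq_trace hA hchar]
  rw [← diag_eq_zero_iff_odd_moments hlam hmpos hdeg horth']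
  exact forall₂_congr fun i hi =>
    (alph_eq_zero_iff hn0 hlam hmpos hdeg horth' hd htr hi).symm
end

section
/- (Spectral excess theorem.) Suppose Γ is regular (of degree λ0). Then Γ is distance-regular if and only if its spectral excess p_d(λ0) = (β_0·β_1·⋯·β_{d−1})/(γ_1·γ_2·⋯·γ_d) = n·(Σ_{i=0}^{d} π0²/(m_i·π_i²))^{−1} equals the average excess k̄_d = (1/n)·Σ_{u∈V} |Γ_d(u)|, where Γ_d(u) is the set of vertices at (graph) distance d from u and π_i = Π_{j≠i} |λ_i − λ_j|. -/
/-!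
Write `A` for the adjacency matrix, `A_i` for the distance-`i` matrix and `J` for the all-ones
matrix. The scalar product of the statement is the normalized Frobenius product:
`⟨f, g⟩ = (1/n) ∑ f(A)_{uv} g(A)_{uv}` (`ip_eq_sum`), so polynomials agreeing on the spectrum take
the same value at `A`, and every polynomial in `A` expands orthogonally in the `p i (A)`.

*Closed forms.* `β_i / γ_{i+1} = p_{i+1}(λ₀) / p_i(λ₀)` telescopes to the first one. For the second,
orthogonality of `p_d` to `∏_{j ≠ 0, i} (X - λ_j)` determines `p_d(λ_i)` up to the factor
`p_d(λ₀)`, and the normalization `⟨p_d, p_d⟩ = p_d(λ₀)` fixes that factor.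

*Spectral excess.* The sum `∑ p_i` is the Hoffman polynomial: `∑ p_i(A) = J` (`sum_aeval_p`). When
`deg f < dist u v`, the `(u, v)` entry of `f(A)` is zero, so the diameter is at most `d` and `p_d(A)` has entries `1` at distance `d`. Hence
`p_d(λ₀) - k̄_d = (1/n) ‖p_d(A) - A_d‖²` (`eval_sub_excess`), and equality in the theorem means
`p_d(A) = A_d`.

If `p_d(A) = A_d`, downward induction using the three-term recurrence and `∑ p_i(A) = J` yields
`p_i(A) = A_i` for every `i` (`aeval_p_eq_step`); then `A_i A_j` is a combination of the `A_h`,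
which is distance-regularity. Conversely, in a distance-regular graph the entries of `f(A)` depend
only on the distance and each `A_i` is a polynomial of degree at most `i` in `A`; orthogonality of
`p_d` to lower degrees then kills the entries of `p_d(A)` at distances below `d`.
-/

open Polynomial Finset

/-- A graph is distance-regular if for all `h i j` and all pairs of vertices `u, v` at
distance `h`, the number of vertices at distance `i` from `u` and `j` from `v` depends
only on `h, i, j`. -/
def IsDistanceRegular {V : Type} (G : SimpleGraph V) : Prop :=
  ∀ h i j : ℕ, ∃ c : ℕ, ∀ u v : V, G.dist u v = h →
    ({w : V | G.dist u w = i ∧ G.dist v w = j}).ncard = c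

namespace SpectralExcess

/-! ### The scalar product and orthogonal expansions -/

/-- The spectral data of the statement: distinct nodes `lam 0 > ⋯ > lam d` with positive weights
`m i`, where `m 0 = 1`, and the associated predistance polynomials `p 0, …, p d`. -/
structure Predist (n d : ℕ) (m : ℕ → ℕ) (lam : ℕ → ℝ) (p : ℕ → Polynomial ℝ) : Prop where
  npos : 0 < n
  lam_lt : ∀ i j : ℕ, i < j → j ≤ d → lam j < lam i
  m_zero : m 0 = 1
  m_pos : ∀ i ≤ d, 0 < m i
  deg : ∀ i ≤ d, (p i).degree = (i : ℕ)
  orth : ∀ i ≤ d, ∀ j ≤ d, i ≠ j → ip n d m lam (p i) (p j) = 0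
  norm : ∀ i ≤ d, ip n d m lam (p i) (p i) = (p i).eval (lam 0)

section Bilinear

variable {n d : ℕ} {m : ℕ → ℕ} {lam : ℕ → ℝ}

lemma ip_comm (f g : ℝ[X]) : ip n d m lam f g = ip n d m lam g f := by
  unfold ip
  congr 1
  exact Finset.sum_congr rfl fun i _ => by ring

lemma ip_add_right (f g h : ℝ[X]) :
    ip n d m lam f (g + h) = ip n d m lam f g + ip n d m lam f h := by
  unfold ip
  rw [← mul_add, ← Finset.sum_add_distrib]
  congr 1
  exact Finset.sum_congr rfl fun i _ => by rw [eval_add]; ring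

lemma ip_C_mul_right (c : ℝ) (f g : ℝ[X]) :
    ip n d m lam f (C c * g) = c * ip n d m lam f g := by
  unfold ip
  rw [mul_left_comm, Finset.mul_sum (a := c)]
  congr 1
  exact Finset.sum_congr rfl fun i _ => by rw [eval_mul, eval_C]; ring

lemma ip_zero_right (f : ℝ[X]) : ip n d m lam f 0 = 0 := by
  simp [ip]

lemma ip_sum_right {ι : Type*} (f : ℝ[X]) (s : Finset ι) (g : ι → ℝ[X]) :
    ip n d m lam f (∑ i ∈ s, g i) = ∑ i ∈ s, ip n d m lam f (g i) := by
  classical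
  induction s using Finset.induction_on with
  | empty => simp [ip_zero_right]
  | insert a s ha ih => rw [Finset.sum_insert ha, Finset.sum_insert ha, ip_add_right, ih]

lemma ip_mul_left (f g h : ℝ[X]) : ip n d m lam (f * g) h = ip n d m lam g (f * h) := by
  unfold ip
  congr 1
  exact Finset.sum_congr rfl fun i _ => by rw [eval_mul, eval_mul]; ring

lemma ip_congr_left {f f' : ℝ[X]} (h : ∀ i ≤ d, f.eval (lam i) = f'.eval (lam i)) (g : ℝ[X]) :
    ip n d m lam f g = ip n d m lam f' g := by
  unfold ip
  congr 1
  exact Finset.sum_congr rfl fun i hi => by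
    rw [h i (Nat.lt_succ_iff.mp (Finset.mem_range.mp hi))]

end Bilinear

namespace Predist

variable {n d : ℕ} {m : ℕ → ℕ} {lam : ℕ → ℝ} {p : ℕ → Polynomial ℝ}

lemma lam_injOn (S : Predist n d m lam p) :
    Set.InjOn lam (Finset.range (d + 1) : Finset ℕ) := by
  intro i hi j hj h
  simp only [Finset.coe_range, Set.mem_Iio] at hi hj
  rcases lt_trichotomy i j with hij | hij | hij
  · exact absurd h (S.lam_lt i j hij (by omega)).ne'
  · exact hij
  · exact absurd h (S.lam_lt j i hij (by omega)).ne

lemma lam_sub_ne_zero (S : Predist n d m lam p) {i j : ℕ} (hi : i ≤ d) (hj : j ≤ d)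
    (hij : i ≠ j) : lam i - lam j ≠ 0 := fun h =>
  hij (S.lam_injOn (by simp; omega) (by simp; omega) (sub_eq_zero.mp h))

lemma eval_eq_zero_of_ip_self (S : Predist n d m lam p) {f : ℝ[X]}
    (h : ip n d m lam f f = 0) : ∀ i ≤ d, f.eval (lam i) = 0 := by
  intro i hi
  have hn : ((n : ℝ)⁻¹) ≠ 0 := inv_ne_zero (by exact_mod_cast S.npos.ne')
  have h1 := (mul_eq_zero.mp h).resolve_left hn
  rw [Finset.sum_eq_zero_iff_of_nonneg (fun j _ => by
    rw [mul_assoc]; exact mul_nonneg (Nat.cast_nonneg _) (mul_self_nonneg _))] at h1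
  have h2 := h1 i (by simp; omega)
  have hm : (m i : ℝ) ≠ 0 := by exact_mod_cast (S.m_pos i hi).ne'
  simpa [hm] using h2

lemma eq_zero_of_eval (S : Predist n d m lam p) {f : ℝ[X]} (hf : f.degree < (d + 1 : ℕ))
    (h : ∀ i ≤ d, f.eval (lam i) = 0) : f = 0 := by
  refine Polynomial.eq_zero_of_degree_lt_of_eval_index_eq_zero _ S.lam_injOn
    (by simpa using hf) fun i hi => h i (Nat.lt_succ_iff.mp (Finset.mem_range.mp hi))

lemma ne_zero (S : Predist n d m lam p) {i : ℕ} (hi : i ≤ d) : p i ≠ 0 := by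
  intro h
  have := S.deg i hi
  simp [h] at this

lemma eval_pos (S : Predist n d m lam p) {i : ℕ} (hi : i ≤ d) : 0 < (p i).eval (lam 0) := by
  rw [← S.norm i hi]
  refine lt_of_le_of_ne ?_ fun h => S.ne_zero hi (S.eq_zero_of_eval ?_
    (S.eval_eq_zero_of_ip_self h.symm))
  · unfold ip
    refine mul_nonneg (by positivity) (Finset.sum_nonneg fun j _ => ?_)
    rw [mul_assoc]
    exact mul_nonneg (Nat.cast_nonneg _) (mul_self_nonneg _)
  · rw [S.deg i hi]
    exact_mod_cast Nat.lt_succ_of_le hi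

lemma exists_degree_sub_lt {f g : ℝ[X]} {N : ℕ} (hf : f.degree = N)
    (hg : g.degree < (N + 1 : ℕ)) : ∃ c : ℝ, (g - C c * f).degree < N := by
  have hlc : f.coeff N ≠ 0 := Polynomial.coeff_ne_zero_of_eq_degree hf
  refine ⟨g.coeff N / f.coeff N, ?_⟩
  rw [Polynomial.degree_lt_iff_coeff_zero]
  intro k hk
  rw [coeff_sub, coeff_C_mul]
  rcases hk.eq_or_lt with rfl | hk
  · rw [div_mul_cancel₀ _ hlc, sub_self]
  · have h1 : g.coeff k = 0 :=
      Polynomial.coeff_eq_zero_of_degree_lt (hg.trans_le (by exact_mod_cast hk))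
    have h2 : f.coeff k = 0 :=
      Polynomial.coeff_eq_zero_of_degree_lt (by rw [hf]; exact_mod_cast hk)
    rw [h1, h2, mul_zero, sub_zero]

/-- Since `p 0, …, p (N - 1)` have degrees `0, …, N - 1`, they span the polynomials of degree
`< N`; orthogonality to them is therefore orthogonality to all polynomials of degree `< N`. -/
lemma ip_eq_zero_of_lt (S : Predist n d m lam p) (f : ℝ[X]) (N : ℕ) (hN : N ≤ d + 1)
    (hf : ∀ i < N, ip n d m lam f (p i) = 0) (g : ℝ[X]) (hg : g.degree < N) :
    ip n d m lam f g = 0 := by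
  induction N generalizing g with
  | zero =>
    have : g = 0 := by
      by_contra h0
      rw [Polynomial.degree_eq_natDegree h0] at hg
      exact absurd hg (by simp)
    rw [this, ip_zero_right]
  | succ N ih =>
    have hdeg := S.deg N (by omega)
    obtain ⟨c, hlow⟩ := exists_degree_sub_lt (g := g) hdeg (by exact_mod_cast hg)
    have h1 := ih (by omega) (fun i hi => hf i (by omega)) _ hlow
    have h2 : g = (g - C c * p N) + C c * p N := by ring
    rw [h2, ip_add_right, h1, ip_C_mul_right, hf N (by omega), mul_zero, add_zero]

lemma ip_p_eq_zero (S : Predist n d m lam p) {i : ℕ} (hi : i ≤ d) {g : ℝ[X]}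
    (hg : g.degree < i) : ip n d m lam (p i) g = 0 :=
  S.ip_eq_zero_of_lt (p i) i (by omega)
    (fun j hj => S.orth i hi j (by omega) (by omega)) g hg

/-- On the spectrum, every polynomial coincides with its orthogonal expansion in the predistance
polynomials. -/
lemma eval_expansion (S : Predist n d m lam p) (f : ℝ[X]) : ∀ i ≤ d,
    f.eval (lam i) = (∑ h ∈ Finset.range (d + 1),
      C (ip n d m lam f (p h) / ip n d m lam (p h) (p h)) * p h).eval (lam i) := by
  set F := ∑ h ∈ Finset.range (d + 1),
      C (ip n d m lam f (p h) / ip n d m lam (p h) (p h)) * p h with hF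
  have hr : ∀ j < d + 1, ip n d m lam (f - F) (p j) = 0 := by
    intro j hj
    have h1 : ip n d m lam (p j) F = ip n d m lam f (p j) := by
      rw [hF, ip_sum_right, Finset.sum_eq_single j]
      · rw [ip_C_mul_right, div_mul_cancel₀]
        rw [S.norm j (by omega)]
        exact (S.eval_pos (by omega)).ne'
      · intro b hb hbj
        rw [ip_C_mul_right, S.orth j (by omega) b (by simp at hb; omega) hbj.symm, mul_zero]
      · intro h; simp at h; omega
    have h2 : f - F = f + C (-1) * F := by simp; ring
    rw [ip_comm, h2, ip_add_right, ip_C_mul_right, h1, ip_comm]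
    ring
  -- interpolate `f - F` on the spectrum by a polynomial of degree at most `d`
  let g := Lagrange.interpolate (Finset.range (d + 1)) lam (fun i => (f - F).eval (lam i))
  have hg : ∀ i ≤ d, (f - F).eval (lam i) = g.eval (lam i) := by
    intro i hi
    exact (Lagrange.eval_interpolate_at_node (fun i => (f - F).eval (lam i)) S.lam_injOn (by simp; omega)).symm
  have hgd : g.degree < (d + 1 : ℕ) := by
    have := Lagrange.degree_interpolate_lt (fun i => (f - F).eval (lam i)) S.lam_injOn
    rwa [Finset.card_range] at this
  have h0 : ip n d m lam g g = 0 := by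
    rw [← ip_congr_left hg]
    exact S.ip_eq_zero_of_lt _ (d + 1) le_rfl hr g hgd
  intro i hi
  have h1 := hg i hi
  rw [S.eval_eq_zero_of_ip_self h0 i hi, eval_sub] at h1
  linarith

lemma p_zero (S : Predist n d m lam p) (hm : ∑ i ∈ Finset.range (d + 1), m i = n) :
    (p 0).eval (lam 0) = 1 := by
  obtain ⟨c, hc⟩ : ∃ c, p 0 = C c := ⟨_, Polynomial.eq_C_of_degree_eq_zero (S.deg 0 (by omega))⟩
  have h1 := S.norm 0 (by omega)
  have h2 := S.eval_pos (i := 0) (by omega)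
  have hn : (n : ℝ) ≠ 0 := by exact_mod_cast S.npos.ne'
  rw [hc, eval_C] at h2 ⊢
  rw [hc] at h1
  simp only [ip, eval_C] at h1
  rw [← Finset.sum_mul, ← Finset.sum_mul, ← Nat.cast_sum, hm] at h1
  field_simp at h1
  nlinarith

lemma degree_p_one_mul (S : Predist n d m lam p) (hd : 1 ≤ d) {i : ℕ} (hi : i ≤ d) :
    (p 1 * p i).degree = ((i + 1 : ℕ) : WithBot ℕ) := by
  rw [Polynomial.degree_mul, S.deg 1 hd, S.deg i hi]
  norm_cast
  omega

/-- The product `p 1 * p i` has degree `i + 1`, so its component along `p (i + 1)` is nonzero. -/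
lemma ip_p_one_mul_ne_zero (S : Predist n d m lam p) {i : ℕ} (hi : i + 1 ≤ d) :
    ip n d m lam (p 1 * p i) (p (i + 1)) ≠ 0 := by
  intro h
  rw [ip_comm] at h
  have hdeg := S.degree_p_one_mul (by omega) (i := i) (by omega)
  -- orthogonality to `p 1 * p i` and to all lower degrees forces `p (i + 1)` to be self-orthogonal
  obtain ⟨c, hlow⟩ := exists_degree_sub_lt (g := p (i + 1)) hdeg (by
    rw [S.deg (i + 1) hi]; exact_mod_cast Nat.lt_succ_self _)
  have h1 := S.ip_p_eq_zero hi hlow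
  have h2 : p (i + 1) = (p (i + 1) - C c * (p 1 * p i)) + C c * (p 1 * p i) := by ring
  have h3 : ip n d m lam (p (i + 1)) (p (i + 1)) = 0 := by
    calc ip n d m lam (p (i + 1)) (p (i + 1))
        = ip n d m lam (p (i + 1)) ((p (i + 1) - C c * (p 1 * p i)) + C c * (p 1 * p i)) := by
          rw [← h2]
      _ = 0 := by rw [ip_add_right, h1, ip_C_mul_right, h, mul_zero, add_zero]
  rw [S.norm _ hi] at h3
  exact (S.eval_pos hi).ne' h3

/-! ### The two closed forms of the spectral excess -/

lemma eval_eq_prod_div_prod (S : Predist n d m lam p)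
    (hm : ∑ i ∈ Finset.range (d + 1), m i = n) :
    (p d).eval (lam 0) = (∏ i ∈ Finset.range d, bet n d m lam p i) /
      (∏ i ∈ Finset.Icc 1 d, gam n d m lam p i) := by
  have hicc : ∏ i ∈ Finset.Icc 1 d, gam n d m lam p i =
      ∏ i ∈ Finset.range d, gam n d m lam p (i + 1) := by
    rw [Finset.range_eq_Ico, Finset.prod_Ico_add' (fun i => gam n d m lam p i) 0 d 1]
    rfl
  rw [hicc, ← Finset.prod_div_distrib]
  have hstep : ∀ i ∈ Finset.range d, bet n d m lam p i / gam n d m lam p (i + 1) =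
      (p (i + 1)).eval (lam 0) / (p i).eval (lam 0) := by
    intro i hi
    have hi : i < d := Finset.mem_range.mp hi
    have h0 := S.ip_p_one_mul_ne_zero (i := i) (by omega)
    have h1 : ip n d m lam (p 1 * p (i + 1)) (p i) = ip n d m lam (p 1 * p i) (p (i + 1)) := by
      rw [ip_mul_left, ip_comm]
    have e1 := (S.eval_pos (i := i) (by omega)).ne'
    have e2 := (S.eval_pos (i := i + 1) (by omega)).ne'
    unfold bet gam xi
    rw [if_pos hi, if_pos (by omega), Nat.add_sub_cancel, h1, S.norm i (by omega),
      S.norm (i + 1) (by omega)]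
    field_simp
  have htel : ∀ e ≤ d, ∏ i ∈ Finset.range e, (p (i + 1)).eval (lam 0) / (p i).eval (lam 0) =
      (p e).eval (lam 0) := by
    intro e
    induction e with
    | zero => intro _; rw [Finset.prod_range_zero, S.p_zero hm]
    | succ e ih =>
      intro he
      rw [Finset.prod_range_succ, ih (by omega),
        mul_div_cancel₀ _ (S.eval_pos (i := e) (by omega)).ne']
  rw [Finset.prod_congr rfl hstep, htel d le_rfl]

/-- Testing `p d` against the polynomial `∏_{j ≠ 0, i} (X - lam j)` of degree `d - 1` determines
the value of `p d` at `lam i` from its value at `lam 0`. -/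
lemma eval_p_d (S : Predist n d m lam p) {i : ℕ} (hi : i ≤ d) :
    (m i : ℝ) * (p d).eval (lam i) * ∏ j ∈ (Finset.range (d + 1)).erase i, (lam i - lam j) =
      (p d).eval (lam 0) * ∏ j ∈ (Finset.range (d + 1)).erase 0, (lam 0 - lam j) := by
  rcases eq_or_ne i 0 with rfl | hi0
  · rw [S.m_zero]; simp
  set s := ((Finset.range (d + 1)).erase 0).erase i with hs
  have hs' : s = ((Finset.range (d + 1)).erase i).erase 0 := Finset.erase_right_comm
  have hi0' : i ∈ (Finset.range (d + 1)).erase 0 := by simp; omega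
  have h0i : 0 ∈ (Finset.range (d + 1)).erase i := by simp; omega
  have hcard : s.card + 1 = d := by
    rw [hs, Finset.card_erase_add_one hi0', Finset.card_erase_of_mem (by simp)]
    simp
  let g : ℝ[X] := ∏ j ∈ s, (X - C (lam j))
  have hg : g.degree < d := by
    simp only [g]
    rw [Polynomial.degree_prod]
    simp only [Polynomial.degree_X_sub_C, Finset.sum_const, nsmul_eq_mul, mul_one]
    exact_mod_cast (by omega : s.card < d)
  have h := S.ip_p_eq_zero le_rfl hg
  have hn : ((n : ℝ)⁻¹) ≠ 0 := inv_ne_zero (by exact_mod_cast S.npos.ne')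
  have h1 := (mul_eq_zero.mp h).resolve_left hn
  have hge : ∀ x, g.eval x = ∏ j ∈ s, (x - lam j) := by
    intro x; simp [g, Polynomial.eval_prod]
  rw [← Finset.add_sum_erase _ _ (show 0 ∈ Finset.range (d + 1) by simp),
    ← Finset.add_sum_erase _ _ hi0', Finset.sum_eq_zero (s := s) (fun j hj => by
      rw [hge, Finset.prod_eq_zero hj (sub_self _), mul_zero]), hge, hge, S.m_zero] at h1
  rw [← Finset.mul_prod_erase _ _ hi0', ← Finset.mul_prod_erase _ _ h0i, ← hs, ← hs']
  linear_combination (lam i - lam 0) * h1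

lemma eval_eq_inv_sum (S : Predist n d m lam p) :
    (p d).eval (lam 0) = (n : ℝ) * (∑ i ∈ Finset.range (d + 1),
      (∏ j ∈ (Finset.range (d + 1)).erase 0, |lam 0 - lam j|) ^ 2 /
        ((m i : ℝ) * (∏ j ∈ (Finset.range (d + 1)).erase i, |lam i - lam j|) ^ 2))⁻¹ := by
  simp only [← Finset.abs_prod, sq_abs]
  set P := (p d).eval (lam 0) with hP
  have hPpos : 0 < P := S.eval_pos le_rfl
  have hn : (n : ℝ) ≠ 0 := by exact_mod_cast S.npos.ne'
  set T := ∑ i ∈ Finset.range (d + 1),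
      (∏ j ∈ (Finset.range (d + 1)).erase 0, (lam 0 - lam j)) ^ 2 /
        ((m i : ℝ) * (∏ j ∈ (Finset.range (d + 1)).erase i, (lam i - lam j)) ^ 2) with hT
  have key : P = (n : ℝ)⁻¹ * (P ^ 2 * T) := by
    conv_lhs => rw [hP, ← S.norm d le_rfl, ip]
    congr 1
    rw [hT, Finset.mul_sum]
    refine Finset.sum_congr rfl fun i hi => ?_
    have hi : i ≤ d := by simp at hi; omega
    have hm : (m i : ℝ) ≠ 0 := by exact_mod_cast (S.m_pos i hi).ne'
    have hw : ∏ j ∈ (Finset.range (d + 1)).erase i, (lam i - lam j) ≠ 0 := by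
      refine Finset.prod_ne_zero_iff.mpr fun j hj => S.lam_sub_ne_zero hi ?_ ?_
      · simp at hj; omega
      · simp at hj; omega
    have h := S.eval_p_d hi
    rw [← hP] at h
    field_simp
    linear_combination congrArg (· ^ 2) h
  have h2 : (n : ℝ) = P * T := by
    field_simp at key
    exact key
  have hT0 : T ≠ 0 := by
    rintro h
    rw [h, mul_zero] at h2
    exact hn h2
  rw [h2, mul_assoc, mul_inv_cancel₀ hT0, mul_one]

end Predist

/-! ### Polynomials in the adjacency matrix -/

open Matrix

/-- The distance-`i` matrix `A_i` of a graph, with entry `1` at the pairs at distance `i`. -/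
noncomputable def distMatrix {V : Type} (G : SimpleGraph V) (i : ℕ) : Matrix V V ℝ :=
  Matrix.of fun u v => if G.dist u v = i then 1 else 0

lemma distMatrix_apply {V : Type} (G : SimpleGraph V) (i : ℕ) (u v : V) :
    distMatrix G i u v = if G.dist u v = i then 1 else 0 := rfl

lemma sum_ncard {V : Type} [Fintype V] (G : SimpleGraph V) (i : ℕ) : ∑ u : V, (({w : V | G.dist u w = i} : Set V).ncard : ℝ) =
    ∑ u, ∑ v, distMatrix G i u v := by
  classical
  refine Finset.sum_congr rfl fun u _ => ?_
  simp only [distMatrix_apply, Finset.sum_boole]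
  rw [Set.ncard_eq_toFinset_card']
  simp

lemma distMatrix_mul_apply {V : Type} [Fintype V] (G : SimpleGraph V) (i j : ℕ)
    (u v : V) :
    (distMatrix G i * distMatrix G j) u v =
      (({w : V | G.dist u w = i ∧ G.dist v w = j} : Set V).ncard : ℝ) := by
  classical
  rw [Matrix.mul_apply, Set.ncard_eq_toFinset_card']
  simp only [distMatrix_apply, ← ite_and, mul_ite, mul_one, mul_zero, Finset.sum_boole]
  congr 2
  ext w
  simp only [Finset.mem_filter, Finset.mem_univ, true_and, Set.toFinset_ofPred]
  rw [SimpleGraph.dist_comm (u := w), and_comm]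

lemma eq_zero_of_sum_mul_self {V : Type} [Fintype V] {M : Matrix V V ℝ}
    (h : ∑ u, ∑ v, M u v * M u v = 0) : M = 0 := by
  rw [Finset.sum_eq_zero_iff_of_nonneg fun u _ =>
    Finset.sum_nonneg fun v _ => mul_self_nonneg (M u v)] at h
  ext u v
  have h2 := h u (Finset.mem_univ u)
  rw [Finset.sum_eq_zero_iff_of_nonneg fun v _ => mul_self_nonneg (M u v)] at h2
  exact mul_self_eq_zero.mp (h2 v (Finset.mem_univ v))

section Matrix

variable {V : Type} [Fintype V] [DecidableEq V]

lemma aeval_C_mul (A : Matrix V V ℝ) (c : ℝ) (f : ℝ[X]) :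
    aeval A (C c * f) = c • aeval A f := by
  rw [← Polynomial.smul_eq_C_mul, map_smul]

lemma aeval_isSymm {A : Matrix V V ℝ} (hA : A.IsSymm) (f : ℝ[X]) : (aeval A f).IsSymm := by
  rw [Polynomial.aeval_eq_sum_range, Matrix.IsSymm, Matrix.transpose_sum]
  refine Finset.sum_congr rfl fun i _ => ?_
  rw [Matrix.transpose_smul, Matrix.transpose_pow, hA]

/-- The trace of `f(A)` is the sum of `f` over the spectrum of the symmetric matrix `A`, counted
with multiplicities read off from the characteristic polynomial. -/
lemma trace_aeval {A : Matrix V V ℝ} (hA : A.IsSymm) {d : ℕ} {m : ℕ → ℕ} {lam : ℕ → ℝ}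
    (hchar : A.charpoly = ∏ i ∈ Finset.range (d + 1), (X - C (lam i)) ^ m i) (f : ℝ[X]) :
    (aeval A f).trace = ∑ i ∈ Finset.range (d + 1), (m i : ℝ) * f.eval (lam i) := by
  have hH : A.IsHermitian := by
    rw [Matrix.IsHermitian, Matrix.conjTranspose_eq_transpose_of_trivial]; exact hA
  have h1 : (aeval A f).trace = ∑ j, f.eval (hH.eigenvalues j) := by
    have hsp := hH.spectral_theorem
    have hdiag : aeval (diagonal (RCLike.ofReal ∘ hH.eigenvalues) : Matrix V V ℝ) f =
        diagonal (fun j => f.eval (hH.eigenvalues j)) := by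
      have := Polynomial.aeval_algHom_apply (Matrix.diagonalAlgHom (n := V) (α := ℝ) ℝ)
        hH.eigenvalues f
      have h2 : aeval hH.eigenvalues f = fun j => f.eval (hH.eigenvalues j) := by
        funext j
        rw [Polynomial.aeval_pi_apply₂]
        simp
      rw [h2] at this
      exact this
    conv_lhs => rw [hsp]
    have h3 := Polynomial.aeval_algHom_apply
      (Unitary.conjStarAlgAut ℝ (Matrix V V ℝ) hH.eigenvectorUnitary).toAlgEquiv.toAlgHom
      (diagonal (RCLike.ofReal ∘ hH.eigenvalues) : Matrix V V ℝ) f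
    rw [hdiag] at h3
    have h4 : aeval (Unitary.conjStarAlgAut ℝ (Matrix V V ℝ) hH.eigenvectorUnitary
        (diagonal (RCLike.ofReal ∘ hH.eigenvalues) : Matrix V V ℝ)) f =
        Unitary.conjStarAlgAut ℝ (Matrix V V ℝ) hH.eigenvectorUnitary
          (diagonal (fun j => f.eval (hH.eigenvalues j))) := h3
    rw [h4, Unitary.conjStarAlgAut_apply, Matrix.trace_mul_comm, ← mul_assoc]
    simp [Matrix.trace_diagonal]
  have h2 : A.charpoly.roots = ∑ i ∈ Finset.range (d + 1), m i • ({lam i} : Multiset ℝ) := by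
    rw [hchar, Polynomial.roots_prod]
    · simp [Multiset.bind, Multiset.join, Finset.sum]
    · exact Finset.prod_ne_zero_iff.mpr fun i _ => pow_ne_zero _ (Polynomial.X_sub_C_ne_zero _)
  have h3 := hH.roots_charpoly_eq_eigenvalues
  rw [h2] at h3
  have h4 := congrArg (fun s => (s.map fun x => f.eval x).sum) h3
  simp only [Multiset.map_map] at h4
  rw [h1]
  refine Eq.trans h4.symm ?_
  rw [← Multiset.coe_mapAddMonoidHom, map_sum, ← Multiset.coe_sumAddMonoidHom, map_sum]
  simp [Multiset.map_nsmul, Multiset.sum_nsmul]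

end Matrix

/-- The hypotheses of the spectral excess theorem: a connected graph, regular of degree `lam 0`,
whose spectral data and predistance polynomials are given. -/
structure GraphData {V : Type} [Fintype V] [DecidableEq V] (G : SimpleGraph V)
    [DecidableRel G.Adj] (n d : ℕ) (m : ℕ → ℕ) (lam : ℕ → ℝ) (p : ℕ → Polynomial ℝ) : Prop
    extends Predist n d m lam p where
  conn : G.Connected
  card_eq : Fintype.card V = n
  charpoly_eq : (G.adjMatrix ℝ).charpoly =
    ∏ i ∈ Finset.range (d + 1), (X - C (lam i)) ^ m i
  regular : ∀ v, (G.degree v : ℝ) = lam 0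

namespace GraphData

variable {V : Type} [Fintype V] [DecidableEq V] {G : SimpleGraph V} [DecidableRel G.Adj]
  {n d : ℕ} {m : ℕ → ℕ} {lam : ℕ → ℝ} {p : ℕ → Polynomial ℝ}

lemma ip_eq_sum (S : GraphData G n d m lam p) (f g : ℝ[X]) : ip n d m lam f g =
    (n : ℝ)⁻¹ * ∑ u, ∑ v, aeval (G.adjMatrix ℝ) f u v * aeval (G.adjMatrix ℝ) g u v := by
  have h := trace_aeval (G.isSymm_adjMatrix (α := ℝ)) S.charpoly_eq (f * g)
  rw [ip]
  congr 1
  rw [map_mul, Matrix.trace] at h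
  simp only [Matrix.diag_apply, Matrix.mul_apply] at h
  simp only [eval_mul, ← mul_assoc] at h
  rw [← h]
  refine Finset.sum_congr rfl fun u _ => Finset.sum_congr rfl fun v _ => ?_
  rw [(aeval_isSymm (G.isSymm_adjMatrix (α := ℝ)) g).apply]

lemma sum_m (S : GraphData G n d m lam p) : ∑ i ∈ Finset.range (d + 1), m i = n := by
  have h := congrArg Polynomial.natDegree S.charpoly_eq
  rw [Matrix.charpoly_natDegree_eq_dim, S.card_eq, Polynomial.natDegree_prod _ _ fun i _ =>
    pow_ne_zero _ (Polynomial.X_sub_C_ne_zero _)] at h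
  rw [h]
  exact Finset.sum_congr rfl fun i _ => by simp

/-- A polynomial vanishing on the spectrum annihilates `A`, by positivity of
`tr (f(A) f(A)ᵀ)`. -/
lemma aeval_congr (S : GraphData G n d m lam p) {f g : ℝ[X]}
    (h : ∀ i ≤ d, f.eval (lam i) = g.eval (lam i)) :
    aeval (G.adjMatrix ℝ) f = aeval (G.adjMatrix ℝ) g := by
  have h0 : ip n d m lam (f - g) (f - g) = 0 := by
    rw [ip_congr_left (f' := 0) (fun i hi => by rw [eval_sub, h i hi]; simp), ip_comm,
      ip_zero_right]
  have hn : ((n : ℝ)⁻¹) ≠ 0 := inv_ne_zero (by exact_mod_cast S.npos.ne')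
  rw [S.ip_eq_sum] at h0
  have h1 := (mul_eq_zero.mp h0).resolve_left hn
  have h2 := eq_zero_of_sum_mul_self h1
  rwa [map_sub, sub_eq_zero] at h2

lemma aeval_expansion (S : GraphData G n d m lam p) (f : ℝ[X]) :
    aeval (G.adjMatrix ℝ) f = ∑ h ∈ Finset.range (d + 1),
      (ip n d m lam f (p h) / ip n d m lam (p h) (p h)) • aeval (G.adjMatrix ℝ) (p h) := by
  rw [S.aeval_congr (S.eval_expansion f), map_sum]
  exact Finset.sum_congr rfl fun h _ => aeval_C_mul _ _ _

end GraphData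

section Distance

variable {V : Type} [Fintype V] [DecidableEq V] (G : SimpleGraph V) [DecidableRel G.Adj]

lemma pow_apply_eq_zero {k : ℕ} {u v : V} (h : k < G.dist u v) :
    (G.adjMatrix ℝ ^ k) u v = 0 := by
  rw [SimpleGraph.adjMatrix_pow_apply_eq_card_walk, Nat.cast_eq_zero, Fintype.card_eq_zero_iff]
  refine ⟨fun w => ?_⟩
  have h1 := SimpleGraph.dist_le w.1
  have h2 : w.1.length = k := w.2
  omega

lemma pow_dist_apply_ne_zero (hconn : G.Connected) (u v : V) :
    (G.adjMatrix ℝ ^ G.dist u v) u v ≠ 0 := by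
  rw [SimpleGraph.adjMatrix_pow_apply_eq_card_walk, Nat.cast_ne_zero]
  obtain ⟨w, hw⟩ := hconn.exists_walk_length_eq_dist u v
  have : Nonempty {q : G.Walk u v | q.length = G.dist u v} := ⟨⟨w, hw⟩⟩
  exact Fintype.card_ne_zero

lemma aeval_apply_eq_zero {f : ℝ[X]} {u v : V} (h : f.degree < G.dist u v) :
    aeval (G.adjMatrix ℝ) f u v = 0 := by
  rw [Polynomial.aeval_eq_sum_range, Matrix.sum_apply]
  refine Finset.sum_eq_zero fun i hi => ?_
  rw [Matrix.smul_apply]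
  by_cases hi' : i < G.dist u v
  · rw [pow_apply_eq_zero G hi', smul_zero]
  · rw [Polynomial.coeff_eq_zero_of_degree_lt (h.trans_le (by exact_mod_cast not_lt.mp hi')),
      zero_smul]

end Distance

namespace GraphData

variable {V : Type} [Fintype V] [DecidableEq V] {G : SimpleGraph V} [DecidableRel G.Adj]
  {n d : ℕ} {m : ℕ → ℕ} {lam : ℕ → ℝ} {p : ℕ → Polynomial ℝ}

/-! ### The Hoffman polynomial -/

/-- The `lam 0`-eigenspace consists of the constant vectors: it is the kernel of the Laplacian. -/
lemma eigenvector_const (S : GraphData G n d m lam p) {x : V → ℝ}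
    (hx : G.adjMatrix ℝ *ᵥ x = lam 0 • x) (u v : V) : x u = x v := by
  have h : G.lapMatrix ℝ *ᵥ x = 0 := by
    rw [SimpleGraph.lapMatrix, Matrix.sub_mulVec, hx]
    funext w
    simp [SimpleGraph.degMatrix, S.regular]
  exact (SimpleGraph.lapMatrix_mulVec_eq_zero_iff_forall_reachable G).mp h u v (S.conn u v)

lemma aeval_row_sum (S : GraphData G n d m lam p) (f : ℝ[X]) :
    aeval (G.adjMatrix ℝ) f *ᵥ (fun _ => 1) = fun _ => f.eval (lam 0) := by
  have h1 : G.adjMatrix ℝ *ᵥ (fun _ => 1) = fun _ => lam 0 := by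
    funext v
    simp [SimpleGraph.adjMatrix_mulVec_apply, S.regular]
  have hpow : ∀ k : ℕ, (G.adjMatrix ℝ ^ k) *ᵥ (fun _ => 1) = fun _ => lam 0 ^ k := by
    intro k
    induction k with
    | zero => simp
    | succ k ih =>
      have h2 : (fun _ : V => lam 0) = lam 0 • fun _ => 1 := by funext; simp
      rw [pow_succ, ← Matrix.mulVec_mulVec, h1, h2, Matrix.mulVec_smul, ih]
      funext v
      simp [pow_succ']
  rw [Polynomial.aeval_eq_sum_range, Matrix.sum_mulVec, Polynomial.eval_eq_sum_range]
  funext v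
  simp [Matrix.smul_mulVec, hpow]

/-- The sum of all the predistance polynomials is the Hoffman polynomial: it maps `A` to the
all-ones matrix. On the spectrum it equals `n` at `lam 0` and vanishes elsewhere, because the
reproducing property `⟨H, p i⟩ = p i (lam 0) = ⟨p i, p i⟩` gives all its coefficients `1`. -/
lemma sum_aeval_p (S : GraphData G n d m lam p) (u v : V) :
    ∑ h ∈ Finset.range (d + 1), aeval (G.adjMatrix ℝ) (p h) u v = 1 := by
  have hn : (n : ℝ) ≠ 0 := by exact_mod_cast S.npos.ne'
  let r : ℕ → ℝ := fun i => if i = 0 then (n : ℝ) else 0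
  let H := Lagrange.interpolate (Finset.range (d + 1)) lam r
  have hH : ∀ i ≤ d, H.eval (lam i) = r i := fun i hi =>
    Lagrange.eval_interpolate_at_node r S.lam_injOn (by simp; omega)
  have hip : ∀ g, ip n d m lam H g = g.eval (lam 0) := by
    intro g
    rw [ip, Finset.sum_eq_single 0]
    · rw [hH 0 (by omega), S.m_zero]
      simp only [r, if_true]
      field_simp
      simp
    · intro i hi hi0
      rw [hH i (by simp at hi; omega)]
      simp [r, hi0]
    · simp
  have hexp : aeval (G.adjMatrix ℝ) H =
      ∑ h ∈ Finset.range (d + 1), aeval (G.adjMatrix ℝ) (p h) := by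
    rw [S.aeval_expansion H]
    refine Finset.sum_congr rfl fun h hh => ?_
    have hh : h ≤ d := by simp at hh; omega
    rw [hip, S.norm h hh, div_self (S.eval_pos hh).ne', one_smul]
  set J := aeval (G.adjMatrix ℝ) H with hJ
  have hcomm : G.adjMatrix ℝ * J = lam 0 • J := by
    have : aeval (G.adjMatrix ℝ) (X * H) = aeval (G.adjMatrix ℝ) (C (lam 0) * H) := by
      refine S.aeval_congr fun i hi => ?_
      rw [eval_mul, eval_mul, eval_X, eval_C, hH i hi]
      by_cases hi0 : i = 0
      · rw [hi0]
      · simp [r, hi0]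
    rwa [map_mul, aeval_X, aeval_C_mul] at this
  have hcol : ∀ a b c, J a c = J b c := by
    intro a b c
    refine S.eigenvector_const (x := fun w => J w c) ?_ a b
    funext w
    have := congrFun (congrFun hcomm w) c
    simpa [Matrix.mul_apply, Matrix.mulVec, dotProduct] using this
  have hsym : J.IsSymm := aeval_isSymm (G.isSymm_adjMatrix (α := ℝ)) H
  have hconst : ∀ w, J u w = J u v := by
    intro w
    rw [← hsym.apply u w, hcol w v u, hsym.apply u v]
  have hrow := congrFun (S.aeval_row_sum H) u
  rw [← hJ, hH 0 (by omega)] at hrow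
  simp only [Matrix.mulVec, dotProduct, mul_one, hconst, Finset.sum_const, Finset.card_univ,
    S.card_eq, nsmul_eq_mul, r, if_true] at hrow
  rw [← Matrix.sum_apply, ← hexp]
  field_simp at hrow
  linarith

lemma dist_le (S : GraphData G n d m lam p) (u v : V) : G.dist u v ≤ d := by
  by_contra hlt
  have h := S.sum_aeval_p u v
  rw [Finset.sum_eq_zero fun i hi => ?_] at h
  · exact zero_ne_one h
  · have hi : i ≤ d := by simp at hi; omega
    refine aeval_apply_eq_zero G ?_
    rw [S.deg i hi]
    exact_mod_cast (by omega : i < G.dist u v)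

/-! ### The distance between `p d (A)` and the distance-`d` matrix -/

lemma aeval_p_d_apply (S : GraphData G n d m lam p) {u v : V} (h : G.dist u v = d) :
    aeval (G.adjMatrix ℝ) (p d) u v = 1 := by
  have h1 := S.sum_aeval_p u v
  rw [Finset.sum_range_succ, Finset.sum_eq_zero fun i hi => ?_, zero_add] at h1
  · exact h1
  · have hi : i < d := Finset.mem_range.mp hi
    refine aeval_apply_eq_zero G ?_
    rw [S.deg i hi.le, h]
    exact_mod_cast hi

/-- The excess of `p d (lam 0)` over the average excess is the squared norm of
`p d (A) - A_d`, since `p d (A)` has entries `1` on the pairs at distance `d`. -/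
lemma eval_sub_excess (S : GraphData G n d m lam p) : (p d).eval (lam 0) -
    (n : ℝ)⁻¹ * ∑ u : V, (({w : V | G.dist u w = d} : Set V).ncard : ℝ) =
    (n : ℝ)⁻¹ * ∑ u, ∑ v, (aeval (G.adjMatrix ℝ) (p d) - distMatrix G d) u v *
      (aeval (G.adjMatrix ℝ) (p d) - distMatrix G d) u v := by
  rw [sum_ncard, ← S.norm d le_rfl, S.ip_eq_sum, ← mul_sub, ← Finset.sum_sub_distrib]
  congr 1
  refine Finset.sum_congr rfl fun u _ => ?_
  rw [← Finset.sum_sub_distrib]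
  refine Finset.sum_congr rfl fun v _ => ?_
  rw [Matrix.sub_apply, distMatrix_apply]
  by_cases h : G.dist u v = d
  · rw [if_pos h, S.aeval_p_d_apply h]; norm_num
  · rw [if_neg h]; ring

lemma eval_eq_excess_iff (S : GraphData G n d m lam p) : (p d).eval (lam 0) =
    (n : ℝ)⁻¹ * ∑ u : V, (({w : V | G.dist u w = d} : Set V).ncard : ℝ) ↔
    aeval (G.adjMatrix ℝ) (p d) = distMatrix G d := by
  rw [← sub_eq_zero, S.eval_sub_excess]
  have hn : ((n : ℝ)⁻¹) ≠ 0 := inv_ne_zero (by exact_mod_cast S.npos.ne')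
  constructor
  · intro h
    exact sub_eq_zero.mp (eq_zero_of_sum_mul_self ((mul_eq_zero.mp h).resolve_left hn))
  · intro h
    simp [h]

/-! ### From the spectral excess to distance-regularity -/

/-- If `p h (A) = A_h` for all `h > i`, then `p i (A) = A_i`. At distance `≥ i` this follows from
`∑ p h (A) = J`; at distance `< i` from the recurrence, which expresses `p 1 (A) A_{i+1}` by
`p i (A), p (i+1) (A), …` with a nonzero coefficient at `p i (A)`. -/
lemma aeval_p_eq_step (S : GraphData G n d m lam p) {i : ℕ} (hi : i < d)
    (ih : ∀ h ≤ d, i < h → aeval (G.adjMatrix ℝ) (p h) = distMatrix G h) :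
    aeval (G.adjMatrix ℝ) (p i) = distMatrix G i := by
  ext u v
  rw [distMatrix_apply]
  rcases lt_trichotomy (G.dist u v) i with hlt | heq | hgt
  · rw [if_neg hlt.ne]
    have hexp := congrFun (congrFun (S.aeval_expansion (p 1 * p (i + 1))) u) v
    have hl : aeval (G.adjMatrix ℝ) (p 1 * p (i + 1)) u v = 0 := by
      rw [map_mul, ih (i + 1) hi (by omega), Matrix.mul_apply]
      refine Finset.sum_eq_zero fun w _ => ?_
      rw [distMatrix_apply]
      by_cases hw : G.dist w v = i + 1
      · have htri := S.conn.dist_triangle (u := w) (v := u) (w := v)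
        rw [aeval_apply_eq_zero G, zero_mul]
        rw [S.deg 1 (by omega), SimpleGraph.dist_comm]
        exact_mod_cast (by omega : 1 < G.dist w u)
      · rw [if_neg hw, mul_zero]
    rw [hl, Matrix.sum_apply, Finset.sum_eq_single i] at hexp
    · rw [Matrix.smul_apply, smul_eq_mul] at hexp
      refine (mul_eq_zero.mp hexp.symm).resolve_left (div_ne_zero ?_ ?_)
      · rw [ip_mul_left, ip_comm]
        exact S.ip_p_one_mul_ne_zero hi
      · rw [S.norm i hi.le]
        exact (S.eval_pos hi.le).ne'
    · intro h hh hne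
      have hh : h ≤ d := by simp at hh; omega
      rw [Matrix.smul_apply]
      rcases lt_or_gt_of_ne hne with hhi | hhi
      · rw [ip_mul_left, S.ip_p_eq_zero hi, zero_div, zero_smul]
        rw [S.degree_p_one_mul (by omega) hh]
        exact_mod_cast (by omega : h + 1 < i + 1)
      · rw [ih h hh hhi, distMatrix_apply, if_neg (by omega), smul_zero]
    · intro h; simp at h; omega
  · rw [if_pos heq]
    have h1 := S.sum_aeval_p u v
    rw [Finset.sum_eq_single i] at h1
    · exact h1
    · intro h hh hne
      have hh : h ≤ d := by simp at hh; omega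
      rcases lt_or_gt_of_ne hne with hhi | hhi
      · refine aeval_apply_eq_zero G ?_
        rw [S.deg h hh, heq]
        exact_mod_cast hhi
      · rw [ih h hh hhi, distMatrix_apply, if_neg (by omega)]
    · intro h; simp at h; omega
  · rw [if_neg hgt.ne']
    refine aeval_apply_eq_zero G ?_
    rw [S.deg i hi.le]
    exact_mod_cast hgt

lemma aeval_p_eq (S : GraphData G n d m lam p)
    (hd : aeval (G.adjMatrix ℝ) (p d) = distMatrix G d) :
    ∀ i ≤ d, aeval (G.adjMatrix ℝ) (p i) = distMatrix G i := by
  suffices h : ∀ k, ∀ i ≤ d, d - i ≤ k → aeval (G.adjMatrix ℝ) (p i) = distMatrix G i from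
    fun i hi => h d i hi (by omega)
  intro k
  induction k with
  | zero =>
    intro i hi hk
    obtain rfl : i = d := by omega
    exact hd
  | succ k ih =>
    intro i hi hk
    rcases hi.eq_or_lt with rfl | hlt
    · exact hd
    · exact S.aeval_p_eq_step hlt fun h hh hih => ih h hh (by omega)

lemma isDistanceRegular_of_eq (S : GraphData G n d m lam p)
    (hd : aeval (G.adjMatrix ℝ) (p d) = distMatrix G d) : IsDistanceRegular G := by
  have hp := S.aeval_p_eq hd
  intro h i j
  -- all pairs at distance `h` give the same count, so the count at any one pair can be taken
  suffices hs : ∃ x : ℝ, ∀ u v : V, G.dist u v = h →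
      (({w : V | G.dist u w = i ∧ G.dist v w = j} : Set V).ncard : ℝ) = x by
    obtain ⟨x, hx⟩ := hs
    by_cases hex : ∃ u v : V, G.dist u v = h
    · obtain ⟨u₀, v₀, h0⟩ := hex
      refine ⟨({w : V | G.dist u₀ w = i ∧ G.dist v₀ w = j} : Set V).ncard, fun u v huv => ?_⟩
      have := (hx u v huv).trans (hx u₀ v₀ h0).symm
      exact_mod_cast this
    · exact ⟨0, fun u v huv => absurd ⟨u, v, huv⟩ hex⟩
  by_cases hij : i ≤ d ∧ j ≤ d
  · refine ⟨ip n d m lam (p i * p j) (p h) / ip n d m lam (p h) (p h), fun u v huv => ?_⟩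
    rw [← distMatrix_mul_apply, ← hp i hij.1, ← hp j hij.2, ← map_mul, S.aeval_expansion,
      Matrix.sum_apply, Finset.sum_eq_single h]
    · rw [Matrix.smul_apply, hp h (huv ▸ S.dist_le u v), distMatrix_apply, if_pos huv, smul_eq_mul,
        mul_one]
    · intro b hb hbh
      rw [Matrix.smul_apply, hp b (by simp at hb; omega), distMatrix_apply, if_neg (by omega),
        smul_zero]
    · intro hh
      have := S.dist_le u v
      simp at hh
      omega
  · refine ⟨0, fun u v _ => ?_⟩
    have : ({w : V | G.dist u w = i ∧ G.dist v w = j} : Set V) = ∅ := by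
      ext w
      have h1 := S.dist_le u w
      have h2 := S.dist_le v w
      simp
      omega
    rw [this]
    simp

/-! ### From distance-regularity to the spectral excess -/

lemma pow_apply_eq (S : GraphData G n d m lam p) (hG : IsDistanceRegular G) (k : ℕ) :
    ∃ φ : ℕ → ℝ, ∀ u v, (G.adjMatrix ℝ ^ k) u v = φ (G.dist u v) := by
  induction k with
  | zero =>
    refine ⟨fun h => if h = 0 then 1 else 0, fun u v => ?_⟩
    simp [Matrix.one_apply, S.conn.dist_eq_zero_iff]
  | succ k ih =>
    obtain ⟨φ, hφ⟩ := ih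
    choose c hc using hG
    refine ⟨fun h => ∑ j ∈ Finset.range (d + 1), φ j * (c h 1 j : ℝ), fun u v => ?_⟩
    rw [pow_succ', SimpleGraph.adjMatrix_mul_apply,
      ← Finset.sum_fiberwise_of_maps_to (t := Finset.range (d + 1)) (g := fun w => G.dist v w)
        (fun w _ => by simpa [Nat.lt_succ_iff] using S.dist_le v w)]
    refine Finset.sum_congr rfl fun j _ => ?_
    rw [← hc (G.dist u v) 1 j u v rfl, Set.ncard_eq_toFinset_card']
    rw [Finset.sum_congr rfl (g := fun _ => φ j) fun w hw => by
      rw [hφ w v, SimpleGraph.dist_comm, (Finset.mem_filter.mp hw).2]]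
    rw [Finset.sum_const, nsmul_eq_mul, mul_comm]
    congr 3
    ext w
    simp [SimpleGraph.dist_eq_one_iff_adj]

lemma aeval_apply_eq (S : GraphData G n d m lam p) (hG : IsDistanceRegular G) (f : ℝ[X]) :
    ∃ φ : ℕ → ℝ, ∀ u v, aeval (G.adjMatrix ℝ) f u v = φ (G.dist u v) := by
  choose φ hφ using S.pow_apply_eq hG
  refine ⟨fun h => ∑ i ∈ Finset.range (f.natDegree + 1), f.coeff i * φ i h, fun u v => ?_⟩
  rw [Polynomial.aeval_eq_sum_range, Matrix.sum_apply]
  exact Finset.sum_congr rfl fun i _ => by rw [Matrix.smul_apply, hφ, smul_eq_mul]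

/-- In a distance-regular graph the distance-`i` matrix is a polynomial of degree at most `i` in
`A`: the power `A ^ i` is a combination of `A_0, …, A_i` in which `A_i` has nonzero coefficient. -/
lemma exists_aeval_eq_distMatrix (S : GraphData G n d m lam p) (hG : IsDistanceRegular G)
    (i : ℕ) : ∃ q : ℝ[X], q.degree ≤ i ∧ aeval (G.adjMatrix ℝ) q = distMatrix G i := by
  induction i using Nat.strong_induction_on with
  | _ i ih =>
  by_cases hex : ∃ u v : V, G.dist u v = i
  · obtain ⟨u₀, v₀, h0⟩ := hex
    obtain ⟨φ, hφ⟩ := S.pow_apply_eq hG i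
    have hφi : φ i ≠ 0 := by
      rw [← h0, ← hφ]
      have := pow_dist_apply_ne_zero G S.conn u₀ v₀
      rwa [h0] at this
    choose! q hq using ih
    refine ⟨C (φ i)⁻¹ * (X ^ i - ∑ j ∈ Finset.range i, C (φ j) * q j), ?_, ?_⟩
    · rw [Polynomial.degree_C_mul (inv_ne_zero hφi)]
      refine (Polynomial.degree_sub_le _ _).trans (max_le (Polynomial.degree_X_pow_le i) ?_)
      refine (Polynomial.degree_sum_le _ _).trans (Finset.sup_le fun j hj => ?_)
      have hj : j < i := Finset.mem_range.mp hj
      rw [← Polynomial.smul_eq_C_mul]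
      exact (Polynomial.degree_smul_le _ _).trans ((hq j hj).1.trans (by exact_mod_cast hj.le))
    · have hsum : aeval (G.adjMatrix ℝ) (∑ j ∈ Finset.range i, C (φ j) * q j) =
          ∑ j ∈ Finset.range i, φ j • distMatrix G j := by
        rw [map_sum]
        exact Finset.sum_congr rfl fun j hj => by
          rw [aeval_C_mul, (hq j (Finset.mem_range.mp hj)).2]
      rw [aeval_C_mul, map_sub, hsum, map_pow, aeval_X]
      ext u v
      rw [Matrix.smul_apply, Matrix.sub_apply, Matrix.sum_apply, smul_eq_mul]
      simp only [Matrix.smul_apply, distMatrix_apply, smul_eq_mul, mul_ite, mul_one, mul_zero,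
        Finset.sum_ite_eq, Finset.mem_range]
      rcases lt_trichotomy (G.dist u v) i with hlt | heq | hgt
      · rw [if_pos hlt, if_neg hlt.ne, hφ]; ring
      · rw [if_neg (by omega), if_pos heq, hφ, heq, sub_zero, inv_mul_cancel₀ hφi]
      · rw [if_neg (by omega), if_neg (by omega), pow_apply_eq_zero G hgt]; ring
  · refine ⟨0, by simp, ?_⟩
    ext u v
    rw [distMatrix_apply, if_neg fun h => hex ⟨u, v, h⟩]
    simp

lemma aeval_p_d_of_isDistanceRegular (S : GraphData G n d m lam p) (hG : IsDistanceRegular G) :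
    aeval (G.adjMatrix ℝ) (p d) = distMatrix G d := by
  ext u v
  rw [distMatrix_apply]
  by_cases h : G.dist u v = d
  · rw [if_pos h, S.aeval_p_d_apply h]
  rw [if_neg h]
  have hlt : G.dist u v < d := lt_of_le_of_ne (S.dist_le u v) h
  obtain ⟨φ, hφ⟩ := S.aeval_apply_eq hG (p d)
  obtain ⟨q, hq, hqA⟩ := S.exists_aeval_eq_distMatrix hG (G.dist u v)
  -- `p d` is orthogonal to the polynomial `q` giving the distance matrix of `dist u v < d`
  have h0 := S.ip_p_eq_zero le_rfl (hq.trans_lt (by exact_mod_cast hlt))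
  have hn : ((n : ℝ)⁻¹) ≠ 0 := inv_ne_zero (by exact_mod_cast S.npos.ne')
  rw [S.ip_eq_sum, hqA] at h0
  have h1 := (mul_eq_zero.mp h0).resolve_left hn
  have h2 : ∑ a, ∑ b, aeval (G.adjMatrix ℝ) (p d) a b * distMatrix G (G.dist u v) a b =
      φ (G.dist u v) * ∑ a, ∑ b, distMatrix G (G.dist u v) a b := by
    rw [Finset.mul_sum]
    refine Finset.sum_congr rfl fun a _ => ?_
    rw [Finset.mul_sum]
    refine Finset.sum_congr rfl fun b _ => ?_
    rw [hφ, distMatrix_apply]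
    by_cases hab : G.dist a b = G.dist u v
    · rw [hab]
    · rw [if_neg hab, mul_zero, mul_zero]
  rw [h2] at h1
  rw [hφ]
  refine (mul_eq_zero.mp h1).resolve_right (ne_of_gt ?_)
  have hnn : ∀ a b, 0 ≤ distMatrix G (G.dist u v) a b := fun a b => by
    rw [distMatrix_apply]; split_ifs <;> norm_num
  refine Finset.sum_pos' (fun a _ => Finset.sum_nonneg fun b _ => hnn a b)
    ⟨u, Finset.mem_univ u, Finset.sum_pos' (fun b _ => hnn u b) ⟨v, Finset.mem_univ v, ?_⟩⟩
  rw [distMatrix_apply, if_pos rfl]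
  exact one_pos

end GraphData

end SpectralExcess

theorem stmt_17
    (V : Type) [Fintype V] [DecidableEq V] (G : SimpleGraph V) [DecidableRel G.Adj]
    (hconn : G.Connected) (n d : ℕ) (hn : Fintype.card V = n)
    (lam : ℕ → ℝ) (m : ℕ → ℕ)
    (hchar : (G.adjMatrix ℝ).charpoly =
      ∏ i ∈ Finset.range (d + 1), (Polynomial.X - Polynomial.C (lam i)) ^ m i)
    (hlam : ∀ i j : ℕ, i < j → j ≤ d → lam j < lam i)
    (hm0 : m 0 = 1) (hmpos : ∀ i ≤ d, 0 < m i)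
    (p : ℕ → Polynomial ℝ)
    (hdeg : ∀ i ≤ d, (p i).degree = (i : ℕ))
    (horth : ∀ i ≤ d, ∀ j ≤ d, i ≠ j → ip n d m lam (p i) (p j) = 0)
    (hnorm : ∀ i ≤ d, ip n d m lam (p i) (p i) = (p i).eval (lam 0))
    (hd : 1 ≤ d) (k : ℕ) (hreg : G.IsRegularOfDegree k) (hk : (k : ℝ) = lam 0) :
    (p d).eval (lam 0) =
        (∏ i ∈ Finset.range d, bet n d m lam p i) /
          (∏ i ∈ Finset.Icc 1 d, gam n d m lam p i) ∧
    (p d).eval (lam 0) =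
        (n : ℝ) * (∑ i ∈ Finset.range (d + 1),
          (∏ j ∈ (Finset.range (d + 1)).erase 0, |lam 0 - lam j|) ^ 2 /
            ((m i : ℝ) * (∏ j ∈ (Finset.range (d + 1)).erase i, |lam i - lam j|) ^ 2))⁻¹ ∧
    (IsDistanceRegular G ↔
      (p d).eval (lam 0) =
        (n : ℝ)⁻¹ * ∑ u : V, (({w : V | G.dist u w = d} : Set V).ncard : ℝ)) := by
  have S : SpectralExcess.GraphData G n d m lam p :=
    { npos := by
        have := hconn.nonempty
        rw [← hn]
        exact Fintype.card_pos
      lam_lt := hlam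
      m_zero := hm0
      m_pos := hmpos
      deg := hdeg
      orth := horth
      norm := hnorm
      conn := hconn
      card_eq := hn
      charpoly_eq := hchar
      regular := fun v => by rw [hreg.degree_eq v, hk] }
  refine ⟨S.eval_eq_prod_div_prod S.sum_m, S.eval_eq_inv_sum, ?_⟩
  rw [S.eval_eq_excess_iff]
  exact ⟨S.aeval_p_d_of_isDistanceRegular, S.isDistanceRegular_of_eq⟩
end
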